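/- arXiv:2109.06968 — 17 statements merged into one kernel-verified Lean document; each statement's English description precedes it below -/
import Mathlib

section
/- Let α, n ∈ ℂ and N ∈ ℂ with N ≠ 0, and set a₁ = −α, a₂ = −n. Let t ↦ c(t) be a differentiable complex function on an open set with t ≠ 0 and c(t) ∉ {0, 1, −1}, satisfying 2·c(t)·t² = (c(t)−1)²·N identically. Let x, y be differentiable functions satisfying the semi-classical Laguerre differential system on the range of c, with x(c(t)) ≠ 0. Define q(t) = t·x(c(t))/(c(t)−1) and p(t) = −2·c(t)·t·y(c(t))/((c(t)−1)·x(c(t))). Then q and p satisfy the Hamiltonian form of the fourth Painlevé equation: q'(t) = q(2p − q − t) − a₁ and p'(t) = p(2q − p + t) + a₂. -/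
/-- The semi-classical Laguerre differential system, transformed via
`q(t) = t·x(c(t))/(c(t)−1)`, `p(t) = −2·c(t)·t·y(c(t))/((c(t)−1)·x(c(t)))`
(with `2·c(t)·t² = (c(t)−1)²·N`), yields the Hamiltonian form of the fourth
Painlevé equation with `a₁ = −α`, `a₂ = −n`. -/
theorem stmt_0 (α n N : ℂ) (hN : N ≠ 0)
    (U : Set ℂ) (hU : IsOpen U)
    (c x y q p dx dy : ℂ → ℂ)
    (hcdiff : ∀ t ∈ U, DifferentiableAt ℂ c t)
    (ht0 : ∀ t ∈ U, t ≠ 0)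
    (hc0 : ∀ t ∈ U, c t ≠ 0)
    (hc1 : ∀ t ∈ U, c t ≠ 1)
    (hcm1 : ∀ t ∈ U, c t ≠ -1)
    (hrel : ∀ t ∈ U, 2 * c t * t ^ 2 = (c t - 1) ^ 2 * N)
    (hx : ∀ t ∈ U, HasDerivAt x (dx (c t)) (c t))
    (hy : ∀ t ∈ U, HasDerivAt y (dy (c t)) (c t))
    (hxne : ∀ t ∈ U, x (c t) ≠ 0)
    (hsys1 : ∀ t ∈ U, dx (c t) / (c t + 1) =
      -N * (x (c t)) ^ 2 / (4 * (c t) ^ 2)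
        - (N * (c t - 1) / (4 * (c t) ^ 2) - 1 / (2 * c t * (c t + 1))) * x (c t)
        - N * y (c t) / c t + α / (2 * c t))
    (hsys2 : ∀ t ∈ U, dy (c t) / (c t + 1) =
      -N * (y (c t)) ^ 2 / (2 * c t * x (c t))
        + (α / (2 * c t * x (c t)) + N * x (c t) / (4 * (c t) ^ 2)) * y (c t)
        + n * x (c t) / (4 * (c t) ^ 2))
    (hq : ∀ t, q t = t * x (c t) / (c t - 1))
    (hp : ∀ t, p t = -(2 * c t * t * y (c t)) / ((c t - 1) * x (c t))) :
    ∀ t ∈ U,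
      HasDerivAt q (q t * (2 * p t - q t - t) - (-α)) t ∧
      HasDerivAt p (p t * (2 * q t - p t + t) + (-n)) t := by
  intro t ht
  have hc := (hcdiff t ht).hasDerivAt
  have hR := hrel t ht
  have h0 := ht0 t ht
  have h1 := hc0 t ht
  have h2 : c t - 1 ≠ 0 := sub_ne_zero.mpr (hc1 t ht)
  have h3 : c t + 1 ≠ 0 := fun h => hcm1 t ht (eq_neg_of_add_eq_zero_left h)
  have h4 := hxne t ht
  have hNe : N = 2 * c t * t ^ 2 / (c t - 1) ^ 2 := by
    rw [hR]; field_simp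
  have hd : deriv c t = 2 * c t * (c t - 1) / (t * (c t + 1)) := by
    have e1 := (hc.const_mul 2).mul (hasDerivAt_pow 2 t)
    have e2 := ((hc.sub_const 1).pow 2).mul_const N
    have e3 := e2.congr_of_eventuallyEq (f₁ := fun s => 2 * c s * s ^ 2)
      (Filter.eventually_of_mem (hU.mem_nhds ht) (fun s hs => by simpa using hrel s hs))
    have e4 := e1.unique e3
    simp at e4
    rw [hNe] at e4
    field_simp at e4 ⊢
    linear_combination (-1 : ℂ) * e4
  have hX := (hx t ht).comp t hc
  have hY := (hy t ht).comp t hc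
  have s1 := hsys1 t ht
  have s2 := hsys2 t ht
  rw [div_eq_iff h3] at s1 s2
  rw [s1, hd] at hX
  rw [s2, hd] at hY
  rw [hd] at hc
  have hq' : q = fun t => t * x (c t) / (c t - 1) := funext hq
  have hp' : p = fun t => -(2 * c t * t * y (c t)) / ((c t - 1) * x (c t)) := funext hp
  constructor
  · have := ((hasDerivAt_id t).mul hX).div (hc.sub_const 1) h2
    rw [hq t, hp t, hq']
    refine this.congr_deriv ?_
    simp only [Function.comp, id, Pi.mul_apply]
    rw [hNe]
    generalize c t = C at *
    generalize x C = X at *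
    generalize y C = Y at *
    field_simp
    ring
  · have := ((((hc.const_mul 2).mul (hasDerivAt_id t)).mul hY).neg).div
      ((hc.sub_const 1).mul hX) (mul_ne_zero h2 h4)
    rw [hq t, hp t, hp']
    refine this.congr_deriv ?_
    simp only [Function.comp, id, Pi.mul_apply, Pi.neg_apply]
    rw [hNe]
    generalize c t = C at *
    generalize x C = X at *
    generalize y C = Y at *
    field_simp
    ring
end

section
/- Let α, n ∈ ℂ and N ∈ ℂ with N ≠ 0. Define K(x, y, c) = (N/(4c²))·( ((c²−1)N − 2c)·y + (c+1)(N·y + n)·x + 2c(c+1)·y·(N·y − α)/x ). If x, y are differentiable functions satisfying the semi-classical Laguerre differential system at a point c with c ∉ {0, −1} and x(c) ≠ 0, then the system is Hamiltonian with respect to the symplectic form N·dx∧dy/x with Hamiltonian K; that is, (N/x(c))·y'(c) = ∂K/∂x evaluated at (x(c), y(c), c), and (N/x(c))·x'(c) = −∂K/∂y evaluated at (x(c), y(c), c). -/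
/-- The Hamiltonian of the semi-classical Laguerre differential system. -/
noncomputable def Klag (α n N x y c : ℂ) : ℂ :=
  N / (4 * c ^ 2) * (((c ^ 2 - 1) * N - 2 * c) * y + (c + 1) * (N * y + n) * x
    + 2 * c * (c + 1) * y * (N * y - α) / x)

/-- The semi-classical Laguerre differential system is Hamiltonian with respect to
the symplectic form `N·dx∧dy/x` with Hamiltonian `Klag`. -/
theorem stmt_1 (α n N : ℂ) (hN : N ≠ 0) (c : ℂ)
    (hc0 : c ≠ 0) (hcm1 : c ≠ -1)
    (x y : ℂ → ℂ) (dx dy : ℂ)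
    (hx : HasDerivAt x dx c) (hy : HasDerivAt y dy c)
    (hxne : x c ≠ 0)
    (hsys1 : dx / (c + 1) = -N * (x c) ^ 2 / (4 * c ^ 2)
        - (N * (c - 1) / (4 * c ^ 2) - 1 / (2 * c * (c + 1))) * x c
        - N * y c / c + α / (2 * c))
    (hsys2 : dy / (c + 1) = -N * (y c) ^ 2 / (2 * c * x c)
        + (α / (2 * c * x c) + N * x c / (4 * c ^ 2)) * y c
        + n * x c / (4 * c ^ 2)) :
    N / x c * dy = deriv (fun u => Klag α n N u (y c) c) (x c) ∧
    N / x c * dx = -deriv (fun v => Klag α n N (x c) v c) (y c) := by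
  have hc1 : c + 1 ≠ 0 := fun h => hcm1 (eq_neg_of_add_eq_zero_left h)
  rw [div_eq_iff hc1] at hsys1 hsys2
  have h1 : HasDerivAt (fun u => Klag α n N u (y c) c)
      (N / (4 * c ^ 2) * ((c + 1) * (N * y c + n) * 1
        + (0 * x c - 2 * c * (c + 1) * y c * (N * y c - α) * 1) / x c ^ 2)) (x c) := by
    unfold Klag
    exact ((((hasDerivAt_id (x c)).const_mul ((c + 1) * (N * y c + n))).const_add _).add
      ((hasDerivAt_const (x c) (2 * c * (c + 1) * y c * (N * y c - α))).div
        (hasDerivAt_id (x c)) hxne)).const_mul _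
  have h2 : HasDerivAt (fun v => Klag α n N (x c) v c)
      (N / (4 * c ^ 2) * (((c ^ 2 - 1) * N - 2 * c) * 1 + (c + 1) * (N * 1) * x c
        + (2 * c * (c + 1) * 1 * (N * y c - α) + 2 * c * (c + 1) * y c * (N * 1)) / x c))
      (y c) := by
    unfold Klag
    have hi := hasDerivAt_id (y c)
    exact (((hi.const_mul ((c ^ 2 - 1) * N - 2 * c)).add
      ((((hi.const_mul N).add_const n).const_mul (c + 1)).mul_const (x c))).add
      (((hi.const_mul (2 * c * (c + 1))).mul ((hi.const_mul N).sub_const α)).div_const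
        (x c))).const_mul _
  rw [h1.deriv, h2.deriv, hsys1, hsys2]
  constructor
  · field_simp
    ring
  · field_simp
    ring
end

section
/- Let α, N ∈ ℂ with N ≠ 0, and let c, t ∈ ℂ with c ∉ {0, 1}, t ≠ 0 and 2ct² = (c−1)²N. Let (qₙ) and (pₙ) be sequences of nonzero complex numbers satisfying, for all n, the standard discrete Painlevé system of type d-P(A₂⁽¹⁾/E₆⁽¹⁾): q_{n+1} + qₙ = pₙ − t − (2+n+α)/pₙ and pₙ + p_{n−1} = qₙ + t − (1+n)/qₙ. Assume qₙ² + (t−pₙ)qₙ − n − 1 ≠ 0 for all n, and define sequences xₙ, yₙ by xₙ/(c−1) = qₙ(qₙ² + (t−pₙ)qₙ + α)/(t(qₙ² + (t−pₙ)qₙ − n − 1)) and −2c·yₙ/((c−1)·xₙ) = (qₙ³pₙ + (2+2n+α+t·pₙ−pₙ²)qₙ² + (n+1)(t−2pₙ)qₙ − (n+1)²)/(t·qₙ(qₙ² + (t−pₙ)qₙ − n − 1)), assuming xₙ ≠ 0 and n + N·yₙ ≠ 0. Then for all n: xₙ·x_{n−1} = 2Nc·yₙ(yₙ − α/N)/(n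 + N·yₙ) and 2(y_{n+1} + yₙ) = 2α/N − (xₙ² + (c−1)xₙ)/c. -/
/-- Solutions of the standard discrete Painlevé system of type d-P(A₂⁽¹⁾/E₆⁽¹⁾), under
the indicated change of variables, yield solutions of the discrete system from the
semi-classical Laguerre weight. -/
theorem stmt_2 (α N : ℂ) (hN : N ≠ 0) (c t : ℂ)
    (hc0 : c ≠ 0) (hc1 : c ≠ 1) (ht : t ≠ 0)
    (hrel : 2 * c * t ^ 2 = (c - 1) ^ 2 * N)
    (q p x y : ℤ → ℂ)
    (hqne : ∀ n, q n ≠ 0) (hpne : ∀ n, p n ≠ 0)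
    (hdP1 : ∀ n : ℤ, q (n + 1) + q n = p n - t - (2 + (n : ℂ) + α) / p n)
    (hdP2 : ∀ n : ℤ, p n + p (n - 1) = q n + t - (1 + (n : ℂ)) / q n)
    (hD : ∀ n : ℤ, (q n) ^ 2 + (t - p n) * q n - (n : ℂ) - 1 ≠ 0)
    (hx : ∀ n : ℤ, x n / (c - 1) =
      q n * ((q n) ^ 2 + (t - p n) * q n + α) /
        (t * ((q n) ^ 2 + (t - p n) * q n - (n : ℂ) - 1)))
    (hy : ∀ n : ℤ, -(2 * c * y n) / ((c - 1) * x n) =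
      ((q n) ^ 3 * p n + (2 + 2 * (n : ℂ) + α + t * p n - (p n) ^ 2) * (q n) ^ 2
        + ((n : ℂ) + 1) * (t - 2 * p n) * q n - ((n : ℂ) + 1) ^ 2) /
        (t * q n * ((q n) ^ 2 + (t - p n) * q n - (n : ℂ) - 1)))
    (hxne : ∀ n, x n ≠ 0)
    (hyne : ∀ n : ℤ, (n : ℂ) + N * y n ≠ 0) :
    ∀ n : ℤ,
      x n * x (n - 1) = 2 * N * c * y n * (y n - α / N) / ((n : ℂ) + N * y n) ∧
      2 * (y (n + 1) + y n) = 2 * α / N - ((x n) ^ 2 + (c - 1) * x n) / c := by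
  have hc1' : c - 1 ≠ 0 := sub_ne_zero.mpr hc1
  have e1 : ∀ n : ℤ, q n * p (n - 1) + (n + 1 + α)
      = p (n - 1) * (p (n - 1) - t - q (n - 1)) := by
    intro n
    have h := hdP1 (n - 1)
    have hp := hpne (n - 1)
    rw [sub_add_cancel] at h
    push_cast at h
    field_simp at h
    linear_combination h
  have e2 : ∀ n : ℤ, q n * (p n + p (n - 1)) = q n ^ 2 + t * q n - (n + 1) := by
    intro n
    have h := hdP2 n
    have hp := hqne n
    field_simp at h
    linear_combination h
  have X : ∀ n : ℤ, t * x n = (c - 1) * (p (n - 1) - t - q (n - 1)) := by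
    intro n
    have h := hx n
    have hp := hpne (n - 1)
    have hq := hqne n
    have d1 : (q n) ^ 2 + (t - p n) * q n - (n : ℂ) - 1 = q n * p (n - 1) := by
      linear_combination -e2 n
    have d2 : (q n) ^ 2 + (t - p n) * q n + α
        = p (n - 1) * (p (n - 1) - t - q (n - 1)) := by
      linear_combination -e2 n + e1 n
    rw [d1, d2, div_eq_div_iff hc1' (by positivity)] at h
    have hk : q n * p (n - 1) ≠ 0 := mul_ne_zero hq hp
    apply mul_left_cancel₀ hk
    linear_combination h
  have Y0 : ∀ n : ℤ, 2 * c * t * y n = (c - 1) * x n * q (n - 1) := by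
    intro n
    have h := hy n
    have hp := hpne (n - 1)
    have hq := hqne n
    have hxn := hxne n
    have d1 : (q n) ^ 2 + (t - p n) * q n - (n : ℂ) - 1 = q n * p (n - 1) := by
      linear_combination -e2 n
    have d2 : (q n) ^ 3 * p n + (2 + 2 * (n : ℂ) + α + t * p n - (p n) ^ 2) * (q n) ^ 2
        + ((n : ℂ) + 1) * (t - 2 * p n) * q n - ((n : ℂ) + 1) ^ 2
        = - (q n ^ 2 * (q (n - 1) * p (n - 1))) := by
      linear_combination (-(q n * p n) - (n + 1) + q n * p (n - 1)) * e2 n + q n ^ 2 * e1 n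
    have hk : q n * p (n - 1) ≠ 0 := mul_ne_zero hq hp
    rw [d1, d2, div_eq_div_iff (mul_ne_zero hc1' hxn)
      (mul_ne_zero (mul_ne_zero ht hq) hk)] at h
    apply mul_left_cancel₀ (mul_ne_zero hq hk)
    linear_combination -h
  have Y : ∀ n : ℤ, N * y n = q (n - 1) * (p (n - 1) - t - q (n - 1)) := by
    intro n
    apply mul_left_cancel₀ (pow_ne_zero 2 hc1')
    linear_combination (-y n) * hrel + t * Y0 n + (c - 1) * q (n - 1) * X n
  intro n
  constructor
  · rw [eq_div_iff (hyne n)]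
    have hR := hpne (n - 1 - 1)
    have a1 := e1 (n - 1)
    have a2 := e2 (n - 1)
    push_cast at a1 a2
    have hX := X n
    have hX' := X (n - 1)
    have hY := Y n
    have b1 : N * y n = -(q (n - 1) * p (n - 1 - 1)) - n := by
      linear_combination hY + a2
    have b2 : (p (n - 1 - 1)) * (p (n - 1 - 1) - t - q (n - 1 - 1)) = α - N * y n := by
      linear_combination -a1 + b1
    have b3 : t * x (n - 1) * (n + N * y n) = (c - 1) * q (n - 1) * (N * y n - α) := by
      linear_combination (n + N * y n) * hX' +
        (c - 1) * (p (n - 1 - 1) - t - q (n - 1 - 1)) * b1 - (c - 1) * q (n - 1) * b2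
    have b4 : N * (y n - α / N) = N * y n - α := by field_simp
    apply mul_left_cancel₀ (pow_ne_zero 2 ht)
    linear_combination t * x n * b3 - t * (N * y n - α) * Y0 n - 2 * c * t ^ 2 * y n * b4
  · have hX := X n
    have hY := Y n
    have hY' := Y (n + 1)
    rw [add_sub_cancel_right] at hY'
    have b5 : N * (x n ^ 2 + (c - 1) * x n)
        = 2 * c * ((p (n - 1) - t - q (n - 1)) * (p (n - 1) - q (n - 1))) := by
      apply mul_left_cancel₀ (pow_ne_zero 2 hc1')
      linear_combination (-(x n ^ 2 + (c - 1) * x n)) * hrel +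
        2 * c * (t * x n + (c - 1) * (p (n - 1) - t - q (n - 1)) + (c - 1) * t) * hX
    field_simp
    linear_combination 2 * c * hY + 2 * c * hY' + b5 + 2 * c * e2 n - 2 * c * e1 n
end

section
/- Let a₀, a₁, a₂ ∈ ℂ with a₀ + a₁ + a₂ = 1. Suppose q and p are differentiable complex functions of t on an open set, with q(t) ≠ 0, satisfying the Hamiltonian form of the fourth Painlevé equation q' = q(2p − q − t) − a₁ and p' = p(2q − p + t) + a₂. Then q is twice differentiable and satisfies the scalar fourth Painlevé equation q'' = (q')²/(2q) + (3/2)·q³ + 2t·q² + (a₂ − a₀ + t²/2)·q − a₁²/(2q). -/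
/-- The Hamiltonian form of the fourth Painlevé equation implies the scalar fourth
Painlevé equation for `q`. -/
theorem stmt_3 (a0 a1 a2 : ℂ) (hnorm : a0 + a1 + a2 = 1)
    (U : Set ℂ) (hU : IsOpen U) (q p : ℂ → ℂ)
    (hqne : ∀ t ∈ U, q t ≠ 0)
    (hq : ∀ t ∈ U, HasDerivAt q (q t * (2 * p t - q t - t) - a1) t)
    (hp : ∀ t ∈ U, HasDerivAt p (p t * (2 * q t - p t + t) + a2) t) :
    ∀ t ∈ U, HasDerivAt (deriv q)
      ((deriv q t) ^ 2 / (2 * q t) + (3 / 2) * (q t) ^ 3 + 2 * t * (q t) ^ 2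
        + (a2 - a0 + t ^ 2 / 2) * q t - a1 ^ 2 / (2 * q t)) t := by
  intro t ht
  have hd : deriv q =ᶠ[nhds t] fun s => q s * (2 * p s - q s - s) - a1 := by
    filter_upwards [hU.mem_nhds ht] with s hs
    exact (hq s hs).deriv
  have h := ((hq t ht).mul
    ((((hp t ht).const_mul 2).sub (hq t ht)).sub (hasDerivAt_id' t))).sub_const a1
  have h2 := h.congr_of_eventuallyEq hd
  refine h2.congr_deriv ?_
  rw [(hq t ht).deriv]
  have h0 := hqne t ht
  have e : a0 = 1 - a1 - a2 := by rw [← hnorm]; ring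
  subst e
  simp only [Pi.sub_apply, Pi.mul_apply]
  field_simp
  ring
end

section
/- Define the ℤ-linear map φ : Λ → Λ̃ by φ(H_x) = H_q, φ(H_y) = H_q + H_p − E₁ − E₃, φ(F₁) = H_q − E₃, φ(F₂) = E₄, φ(F₃) = E₂, φ(F₄) = H_q − E₁, φ(F₅) = E₅, φ(F₆) = E₆, φ(F₇) = E₇, φ(F₈) = E₈. Then: (i) φ preserves the intersection forms, i.e. φ(u)·φ(v) = u·v for all u, v ∈ Λ; (ii) φ is bijective with inverse determined by H_q ↦ H_x, H_p ↦ H_x + H_y − F₁ − F₄, E₁ ↦ H_x − F₄, E₂ ↦ F₃, E₃ ↦ H_x − F₁, E₄ ↦ F₂, E₅ ↦ F₅, E₆ ↦ F₆, E₇ ↦ F₇, E₈ ↦ F₈; (iii) φ maps the surface roots δ₀ = F₇−F₈, δ₁ = H_x−F₃−F₄, δ₂ = F₄−F₅, δ₃ = F₅−F₆, δ₄ = H_y−F₄−F₅, δ₅ = H_x−F₁−F₂, δ₆ = F₆−F₇ respectively to δ̃₀ = E₇−E₈, δ̃₁ = E₁−E₂, δ̃₂ = H_q−E₁−E₅, δ̃₃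 = E₅−E₆, δ̃₄ = H_p−E₃−E₅, δ̃₅ = E₃−E₄, δ̃₆ = E₆−E₇. -/
/-- The standard basis vectors of a copy of `ℤ¹⁰`.
For `Λ` the basis is `(H_x, H_y, F₁, …, F₈) = (latB 0, latB 1, latB 2, …, latB 9)`;
for `Λ̃` the basis is `(H_q, H_p, E₁, …, E₈) = (latB 0, latB 1, latB 2, …, latB 9)`. -/
def latB (i : Fin 10) : Fin 10 → ℤ := Pi.single i 1

/-- The intersection form: the two H-vectors have self-pairing 0 and mutual pairing 1,
H-vectors pair to 0 with the remaining basis vectors, and `Fᵢ·Fⱼ = −δᵢⱼ`. -/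
def latIP (u v : Fin 10 → ℤ) : ℤ :=
  u 0 * v 1 + u 1 * v 0 - ∑ i : Fin 10, (if 2 ≤ (i : ℕ) then u i * v i else 0)

theorem lat_decomp (u : Fin 10 → ℤ) : u = u 0 • latB 0 + u 1 • latB 1 + u 2 • latB 2 +
    u 3 • latB 3 + u 4 • latB 4 + u 5 • latB 5 + u 6 • latB 6 + u 7 • latB 7 +
    u 8 • latB 8 + u 9 • latB 9 := by
  ext i
  fin_cases i <;> simp [latB, Pi.single_apply]

/-- The identification of the Picard lattices for the semi-classical Laguerre weight
(`E₆⁽¹⁾`-surfaces): `φ` preserves the intersection form, is bijective with the given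
inverse `ψ`, and matches the surface root bases. -/
theorem stmt_5 (φ ψ : (Fin 10 → ℤ) →ₗ[ℤ] (Fin 10 → ℤ))
    -- φ(H_x) = H_q
    (hφ0 : φ (latB 0) = latB 0)
    -- φ(H_y) = H_q + H_p − E₁ − E₃
    (hφ1 : φ (latB 1) = latB 0 + latB 1 - latB 2 - latB 4)
    -- φ(F₁) = H_q − E₃
    (hφ2 : φ (latB 2) = latB 0 - latB 4)
    -- φ(F₂) = E₄
    (hφ3 : φ (latB 3) = latB 5)
    -- φ(F₃) = E₂
    (hφ4 : φ (latB 4) = latB 3)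
    -- φ(F₄) = H_q − E₁
    (hφ5 : φ (latB 5) = latB 0 - latB 2)
    -- φ(F₅) = E₅, φ(F₆) = E₆, φ(F₇) = E₇, φ(F₈) = E₈
    (hφ6 : φ (latB 6) = latB 6)
    (hφ7 : φ (latB 7) = latB 7)
    (hφ8 : φ (latB 8) = latB 8)
    (hφ9 : φ (latB 9) = latB 9)
    -- ψ(H_q) = H_x
    (hψ0 : ψ (latB 0) = latB 0)
    -- ψ(H_p) = H_x + H_y − F₁ − F₄
    (hψ1 : ψ (latB 1) = latB 0 + latB 1 - latB 2 - latB 5)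
    -- ψ(E₁) = H_x − F₄
    (hψ2 : ψ (latB 2) = latB 0 - latB 5)
    -- ψ(E₂) = F₃
    (hψ3 : ψ (latB 3) = latB 4)
    -- ψ(E₃) = H_x − F₁
    (hψ4 : ψ (latB 4) = latB 0 - latB 2)
    -- ψ(E₄) = F₂
    (hψ5 : ψ (latB 5) = latB 3)
    -- ψ(E₅) = F₅, ψ(E₆) = F₆, ψ(E₇) = F₇, ψ(E₈) = F₈
    (hψ6 : ψ (latB 6) = latB 6)
    (hψ7 : ψ (latB 7) = latB 7)
    (hψ8 : ψ (latB 8) = latB 8)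
    (hψ9 : ψ (latB 9) = latB 9) :
    -- (i) φ preserves the intersection forms
    (∀ u v, latIP (φ u) (φ v) = latIP u v) ∧
    -- (ii) φ is bijective with inverse ψ
    Function.Bijective φ ∧
    (∀ u, ψ (φ u) = u) ∧ (∀ u, φ (ψ u) = u) ∧
    -- (iii) φ maps the surface roots δᵢ to δ̃ᵢ
    -- δ₀ = F₇−F₈ ↦ δ̃₀ = E₇−E₈
    φ (latB 8 - latB 9) = latB 8 - latB 9 ∧
    -- δ₁ = H_x−F₃−F₄ ↦ δ̃₁ = E₁−E₂
    φ (latB 0 - latB 4 - latB 5) = latB 2 - latB 3 ∧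
    -- δ₂ = F₄−F₅ ↦ δ̃₂ = H_q−E₁−E₅
    φ (latB 5 - latB 6) = latB 0 - latB 2 - latB 6 ∧
    -- δ₃ = F₅−F₆ ↦ δ̃₃ = E₅−E₆
    φ (latB 6 - latB 7) = latB 6 - latB 7 ∧
    -- δ₄ = H_y−F₄−F₅ ↦ δ̃₄ = H_p−E₃−E₅
    φ (latB 1 - latB 5 - latB 6) = latB 1 - latB 4 - latB 6 ∧
    -- δ₅ = H_x−F₁−F₂ ↦ δ̃₅ = E₃−E₄
    φ (latB 0 - latB 2 - latB 3) = latB 4 - latB 5 ∧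
    -- δ₆ = F₆−F₇ ↦ δ̃₆ = E₆−E₇
    φ (latB 7 - latB 8) = latB 7 - latB 8 := by
  have hψφ : ∀ u, ψ (φ u) = u := by
    intro u
    conv_rhs => rw [lat_decomp u]
    conv_lhs => rw [lat_decomp u]
    simp only [map_add, map_sub, map_smul, hφ0, hφ1, hφ2, hφ3, hφ4, hφ5, hφ6, hφ7, hφ8, hφ9,
      hψ0, hψ1, hψ2, hψ3, hψ4, hψ5, hψ6, hψ7, hψ8, hψ9]
    module
  have hφψ : ∀ u, φ (ψ u) = u := by
    intro u
    conv_rhs => rw [lat_decomp u]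
    conv_lhs => rw [lat_decomp u]
    simp only [map_add, map_sub, map_smul, hφ0, hφ1, hφ2, hφ3, hφ4, hφ5, hφ6, hφ7, hφ8, hφ9,
      hψ0, hψ1, hψ2, hψ3, hψ4, hψ5, hψ6, hψ7, hψ8, hψ9]
    module
  have hv : ∀ u, φ u = ![u 0 + u 1 + u 2 + u 5, u 1, -u 1 - u 5, u 4, -u 1 - u 2, u 3,
      u 6, u 7, u 8, u 9] := by
    intro u
    conv_lhs => rw [lat_decomp u]
    simp only [map_add, map_smul, hφ0, hφ1, hφ2, hφ3, hφ4, hφ5, hφ6, hφ7, hφ8, hφ9]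
    ext i
    fin_cases i <;> simp [latB, Pi.single_apply] <;> ring
  refine ⟨?_, ⟨Function.LeftInverse.injective hψφ, Function.RightInverse.surjective hφψ⟩,
    hψφ, hφψ, ?_, ?_, ?_, ?_, ?_, ?_, ?_⟩
  · intro u v
    rw [hv u, hv v]
    simp [latIP, Fin.sum_univ_succ]
    ring
  all_goals
    simp only [map_sub, hφ0, hφ1, hφ2, hφ3, hφ4, hφ5, hφ6, hφ7, hφ8, hφ9]
    try abel
end

section
/- Define the ℤ-linear map φ : Λ → Λ̃ by φ(H_x) = H_g, φ(H_y) = H_f + 2H_g − E₃ − E₄ − E₅ − E₆, φ(F₁) = E₁, φ(F₂) = E₂, φ(F₃) = H_g − E₆, φ(F₄) = H_g − E₅, φ(F₅) = H_g − E₄, φ(F₆) = H_g − E₃, φ(F₇) = E₇, φ(F₈) = E₈. Then: (i) φ preserves the intersection forms, i.e. φ(u)·φ(v) = u·v for all u, v ∈ Λ; (ii) φ is bijective with inverse determined by H_f ↦ 2H_x + H_y − F₃ − F₄ − F₅ − F₆, H_g ↦ H_x, E₁ ↦ F₁, E₂ ↦ F₂, E₃ ↦ H_x − F₆, E₄ ↦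 H_x − F₅, E₅ ↦ H_x − F₄, E₆ ↦ H_x − F₃, E₇ ↦ F₇, E₈ ↦ F₈; (iii) φ maps the surface roots δ₀ = F₅−F₆, δ₁ = 2H_x+H_y−F₁−F₂−F₃−F₄−F₅−F₆, δ₂ = F₆−F₇, δ₃ = F₇−F₈, δ₄ = H_y−F₅−F₆ respectively to δ̃₀ = E₃−E₄, δ̃₁ = H_f−E₁−E₂, δ̃₂ = H_g−E₃−E₇, δ̃₃ = E₇−E₈, δ̃₄ = H_f−E₅−E₆. -/
/-- The identification of the Picard lattices for the hypergeometric weight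
(`D₄⁽¹⁾`-surfaces): `φ` preserves the intersection form, is bijective with the given
inverse `ψ`, and matches the surface root bases. -/
theorem stmt_6 (φ ψ : (Fin 10 → ℤ) →ₗ[ℤ] (Fin 10 → ℤ))
    -- φ(H_x) = H_g
    (hφ0 : φ (latB 0) = latB 1)
    -- φ(H_y) = H_f + 2H_g − E₃ − E₄ − E₅ − E₆
    (hφ1 : φ (latB 1) = latB 0 + 2 • latB 1 - latB 4 - latB 5 - latB 6 - latB 7)
    -- φ(F₁) = E₁, φ(F₂) = E₂
    (hφ2 : φ (latB 2) = latB 2)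
    (hφ3 : φ (latB 3) = latB 3)
    -- φ(F₃) = H_g − E₆
    (hφ4 : φ (latB 4) = latB 1 - latB 7)
    -- φ(F₄) = H_g − E₅
    (hφ5 : φ (latB 5) = latB 1 - latB 6)
    -- φ(F₅) = H_g − E₄
    (hφ6 : φ (latB 6) = latB 1 - latB 5)
    -- φ(F₆) = H_g − E₃
    (hφ7 : φ (latB 7) = latB 1 - latB 4)
    -- φ(F₇) = E₇, φ(F₈) = E₈
    (hφ8 : φ (latB 8) = latB 8)
    (hφ9 : φ (latB 9) = latB 9)
    -- ψ(H_f) = 2H_x + H_y − F₃ − F₄ − F₅ − F₆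
    (hψ0 : ψ (latB 0) = 2 • latB 0 + latB 1 - latB 4 - latB 5 - latB 6 - latB 7)
    -- ψ(H_g) = H_x
    (hψ1 : ψ (latB 1) = latB 0)
    -- ψ(E₁) = F₁, ψ(E₂) = F₂
    (hψ2 : ψ (latB 2) = latB 2)
    (hψ3 : ψ (latB 3) = latB 3)
    -- ψ(E₃) = H_x − F₆
    (hψ4 : ψ (latB 4) = latB 0 - latB 7)
    -- ψ(E₄) = H_x − F₅
    (hψ5 : ψ (latB 5) = latB 0 - latB 6)
    -- ψ(E₅) = H_x − F₄
    (hψ6 : ψ (latB 6) = latB 0 - latB 5)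
    -- ψ(E₆) = H_x − F₃
    (hψ7 : ψ (latB 7) = latB 0 - latB 4)
    -- ψ(E₇) = F₇, ψ(E₈) = F₈
    (hψ8 : ψ (latB 8) = latB 8)
    (hψ9 : ψ (latB 9) = latB 9) :
    -- (i) φ preserves the intersection forms
    (∀ u v, latIP (φ u) (φ v) = latIP u v) ∧
    -- (ii) φ is bijective with inverse ψ
    Function.Bijective φ ∧
    (∀ u, ψ (φ u) = u) ∧ (∀ u, φ (ψ u) = u) ∧
    -- (iii) φ maps the surface roots δᵢ to δ̃ᵢ
    -- δ₀ = F₅−F₆ ↦ δ̃₀ = E₃−E₄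
    φ (latB 6 - latB 7) = latB 4 - latB 5 ∧
    -- δ₁ = 2H_x+H_y−F₁−F₂−F₃−F₄−F₅−F₆ ↦ δ̃₁ = H_f−E₁−E₂
    φ (2 • latB 0 + latB 1 - latB 2 - latB 3 - latB 4 - latB 5 - latB 6 - latB 7)
      = latB 0 - latB 2 - latB 3 ∧
    -- δ₂ = F₆−F₇ ↦ δ̃₂ = H_g−E₃−E₇
    φ (latB 7 - latB 8) = latB 1 - latB 4 - latB 8 ∧
    -- δ₃ = F₇−F₈ ↦ δ̃₃ = E₇−E₈
    φ (latB 8 - latB 9) = latB 8 - latB 9 ∧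
    -- δ₄ = H_y−F₅−F₆ ↦ δ̃₄ = H_f−E₅−E₆
    φ (latB 1 - latB 6 - latB 7) = latB 0 - latB 6 - latB 7 := by
  have dec : ∀ u : Fin 10 → ℤ, u = u 0 • latB 0 + u 1 • latB 1 + u 2 • latB 2 + u 3 • latB 3
      + u 4 • latB 4 + u 5 • latB 5 + u 6 • latB 6 + u 7 • latB 7 + u 8 • latB 8
      + u 9 • latB 9 := by
    intro u
    funext i
    fin_cases i <;> simp [latB, Pi.single_apply]
  have eφ : ∀ u, φ u = ![u 1, u 0 + 2 * u 1 + u 4 + u 5 + u 6 + u 7, u 2, u 3,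
      -u 1 - u 7, -u 1 - u 6, -u 1 - u 5, -u 1 - u 4, u 8, u 9] := by
    intro u
    conv_lhs => rw [dec u]
    simp only [map_add, map_smul, hφ0, hφ1, hφ2, hφ3, hφ4, hφ5, hφ6, hφ7, hφ8, hφ9]
    funext i
    fin_cases i <;> simp [latB, Pi.single_apply] <;> ring
  have eψ : ∀ u, ψ u = ![2 * u 0 + u 1 + u 4 + u 5 + u 6 + u 7, u 0, u 2, u 3,
      -u 0 - u 7, -u 0 - u 6, -u 0 - u 5, -u 0 - u 4, u 8, u 9] := by
    intro u
    conv_lhs => rw [dec u]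
    simp only [map_add, map_smul, hψ0, hψ1, hψ2, hψ3, hψ4, hψ5, hψ6, hψ7, hψ8, hψ9]
    funext i
    fin_cases i <;> simp [latB, Pi.single_apply] <;> ring
  have h1 : ∀ u, ψ (φ u) = u := by
    intro u
    rw [eψ, eφ]
    funext i
    fin_cases i <;> simp <;> ring
  have h2 : ∀ u, φ (ψ u) = u := by
    intro u
    rw [eφ, eψ]
    funext i
    fin_cases i <;> simp <;> ring
  refine ⟨?_, Function.bijective_iff_has_inverse.mpr ⟨ψ, h1, h2⟩, h1, h2, ?_, ?_, ?_, ?_, ?_⟩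
  · intro u v
    rw [eφ, eφ]
    simp [latIP, Fin.sum_univ_succ]
    ring
  · rw [map_sub, hφ6, hφ7]; abel
  · simp only [map_add, map_sub, map_nsmul, hφ0, hφ1, hφ2, hφ3, hφ4, hφ5, hφ6, hφ7]; abel
  · rw [map_sub, hφ7, hφ8]
  · rw [map_sub, hφ8, hφ9]
  · simp only [map_sub, hφ1, hφ6, hφ7]; abel
end

section
/- Let α, β, γ, n ∈ ℂ and let x, y be differentiable functions satisfying the hypergeometric-weight differential system on an open set of values of c avoiding {0, 1}. Set t = 1/c and define f(t) = −(x−β)(x−γ)/(c(nx − αβ + (α+β)x − x² + y)) and g(t) = −(x−γ)(β(γ−β−αc) + (α+β)cx − γx − (c−1)x² + n(x−β+cx) + cy)/((x−β)(x−γ) + c(nx − αβ + (α+β)x − x² + y)), where x = x(1/t), y = y(1/t), c = 1/t, assuming all displayed denominators are nonzero. Then f and g are differentiable in t and satisfy: t(t−1)f' = (1+2n+α+2β−2γ+2g)f² + (β−γ+2g)t − f(1 + n(1+t) + α + β + 2tβ − 2γ − tγ + 2(1+t)g), and t(t−1)f·g' = t(β−γ+g)g − (1+n+β−γ+g)(n+α+β−γ+g)f².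 -/
/-- `P₁` from the hypergeometric-weight differential system. -/
noncomputable def P1 (α β γ n x y c : ℂ) : ℂ :=
  (1 - c) * x ^ 4 + (-α - β + 2 * c * (α + β + n) - γ - 1) * x ^ 3
    + (α * (β + γ + 1) + β * γ + β - c * (β ^ 2 + 2 * β * (2 * α + n) + (α + n) ^ 2) + γ)
      * x ^ 2
    + (α * β * (2 * c * (α + β + n) - 1) - γ * (α * β + α + β)) * x
    + α * β * (γ - α * β * c)
    + 2 * c * y * (x ^ 2 - (α + β + n) * x + α * β) - c * y ^ 2

/-- `P₂` from the hypergeometric-weight differential system. -/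
noncomputable def P2 (α β γ n x y _c : ℂ) : ℂ :=
  n * (α ^ 2 + α * β - α + β ^ 2 - β + γ + n ^ 2 - γ * (α + β + n)
      + 2 * α * n + 2 * β * n - n) * x ^ 2
    - 2 * α * β * n * (α + β - γ + n - 1) * x + n * α * β * (α * β - γ)
    + y * ((α + β - γ + 2 * n - 1) * x ^ 2
        + 2 * (-(α * β) + γ + n ^ 2 + n * (α + β - γ - 1)) * x
        - α * γ - β * γ + α * β * (γ - 2 * n + 1))
    + y ^ 2 * (2 * x - γ + n - 1)

/-- `Q` from the hypergeometric-weight differential system. -/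
noncomputable def Qd (α β γ n x y c : ℂ) : ℂ :=
  c * (c - 1) * (α * β - (n + α + β) * x + x ^ 2 - y)

set_option maxHeartbeats 4000000 in
/-- The hypergeometric-weight differential system, under the change of variables
`t = 1/c`, `f`, `g` as in (transf), becomes the `(f,g)`-system equivalent to the sixth
Painlevé equation. -/
theorem stmt_7 (α β γ n : ℂ) (U : Set ℂ) (hU : IsOpen U)
    (hc0 : ∀ c ∈ U, c ≠ 0) (hc1 : ∀ c ∈ U, c ≠ 1)
    (x y f g : ℂ → ℂ)
    (hQ : ∀ c ∈ U, Qd α β γ n (x c) (y c) c ≠ 0)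
    (hx : ∀ c ∈ U, HasDerivAt x
      (P1 α β γ n (x c) (y c) c / Qd α β γ n (x c) (y c) c) c)
    (hy : ∀ c ∈ U, HasDerivAt y
      (P2 α β γ n (x c) (y c) c / Qd α β γ n (x c) (y c) c) c)
    (hf : ∀ t : ℂ, f t = -((x t⁻¹ - β) * (x t⁻¹ - γ)) /
      (t⁻¹ * (n * x t⁻¹ - α * β + (α + β) * x t⁻¹ - (x t⁻¹) ^ 2 + y t⁻¹)))
    (hg : ∀ t : ℂ, g t = -((x t⁻¹ - γ) *
        (β * (γ - β - α * t⁻¹) + (α + β) * t⁻¹ * x t⁻¹ - γ * x t⁻¹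
          - (t⁻¹ - 1) * (x t⁻¹) ^ 2 + n * (x t⁻¹ - β + t⁻¹ * x t⁻¹) + t⁻¹ * y t⁻¹)) /
      ((x t⁻¹ - β) * (x t⁻¹ - γ)
        + t⁻¹ * (n * x t⁻¹ - α * β + (α + β) * x t⁻¹ - (x t⁻¹) ^ 2 + y t⁻¹)))
    (hden1 : ∀ c ∈ U, c * (n * x c - α * β + (α + β) * x c - (x c) ^ 2 + y c) ≠ 0)
    (hden2 : ∀ c ∈ U, (x c - β) * (x c - γ)
      + c * (n * x c - α * β + (α + β) * x c - (x c) ^ 2 + y c) ≠ 0) :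
    ∀ c ∈ U,
      DifferentiableAt ℂ f c⁻¹ ∧ DifferentiableAt ℂ g c⁻¹ ∧
      c⁻¹ * (c⁻¹ - 1) * deriv f c⁻¹ =
        (1 + 2 * n + α + 2 * β - 2 * γ + 2 * g c⁻¹) * (f c⁻¹) ^ 2
          + (β - γ + 2 * g c⁻¹) * c⁻¹
          - f c⁻¹ * (1 + n * (1 + c⁻¹) + α + β + 2 * c⁻¹ * β - 2 * γ - c⁻¹ * γ
              + 2 * (1 + c⁻¹) * g c⁻¹) ∧
      c⁻¹ * (c⁻¹ - 1) * f c⁻¹ * deriv g c⁻¹ =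
        c⁻¹ * (β - γ + g c⁻¹) * g c⁻¹
          - (1 + n + β - γ + g c⁻¹) * (n + α + β - γ + g c⁻¹) * (f c⁻¹) ^ 2 := by
  intro c hc
  have c0 := hc0 c hc
  have c1 : c - 1 ≠ 0 := sub_ne_zero.2 (hc1 c hc)
  have h1 := hden1 c hc
  have h2 := hden2 c hc
  obtain ⟨W, hW⟩ : ∃ W, W = n * x c - α * β + (α + β) * x c - (x c) ^ 2 + y c := ⟨_, rfl⟩
  have hyW : y c = W - (n * x c - α * β + (α + β) * x c - (x c) ^ 2) := by rw [hW]; ring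
  have W0 : W ≠ 0 := by rw [hW]; exact right_ne_zero_of_mul h1
  obtain ⟨dx, hdx⟩ : ∃ d, d = P1 α β γ n (x c) (y c) c / Qd α β γ n (x c) (y c) c := ⟨_, rfl⟩
  obtain ⟨dy, hdy⟩ : ∃ d, d = P2 α β γ n (x c) (y c) c / Qd α β γ n (x c) (y c) c := ⟨_, rfl⟩
  have Hx := hx c hc
  have Hy := hy c hc
  rw [← hdx] at Hx
  rw [← hdy] at Hy
  have hdx2 : dx = ((x c - 1) * (x c - α) * (x c - β) * (x c - γ) - c * W ^ 2)
      / (-(c * (c - 1) * W)) := by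
    rw [hdx]; congr 1
    · rw [hyW]; unfold P1; ring
    · rw [hyW]; unfold Qd; ring
  have hdy2 : dy = P2 α β γ n (x c) (y c) c / (-(c * (c - 1) * W)) := by
    rw [hdy]; congr 1
    rw [hyW]; unfold Qd; ring
  have HW : HasDerivAt (fun c => n * x c - α * β + (α + β) * x c - (x c) ^ 2 + y c)
      ((n + α + β - 2 * x c) * dx + dy) c := by
    have := ((((Hx.const_mul n).sub_const (α * β)).add (Hx.const_mul (α + β))).sub
      (Hx.pow 2)).add Hy
    refine this.congr_deriv ?_
    norm_num; ring
  have HA : HasDerivAt (fun c => (x c - β) * (x c - γ))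
      ((2 * x c - β - γ) * dx) c := by
    refine ((Hx.sub_const β).mul (Hx.sub_const γ)).congr_deriv ?_
    ring
  have HcW := (hasDerivAt_id c).mul HW
  have HF := HA.neg.div HcW h1
  have HD := HA.add HcW
  have HK : HasDerivAt (fun c => β * (γ - β - α * c) + (α + β) * c * x c - γ * x c
          - (c - 1) * (x c) ^ 2 + n * (x c - β + c * x c) + c * y c)
      (W + c * ((n + α + β - 2 * x c) * dx + dy) + (2 * x c - γ + n) * dx) c := by
    have := HcW.add (((Hx.pow 2).add (Hx.const_mul (n - γ))).add_const (β * γ - β ^ 2 - n * β))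
    refine (this.congr_deriv ?_).congr_of_eventuallyEq (Filter.Eventually.of_forall fun z => ?_)
    · rw [hW]; norm_num; ring
    · simp; ring
  have HG := ((Hx.sub_const γ).mul HK).neg.div HD h2
  have Hi : HasDerivAt (fun t : ℂ => t⁻¹) (-c ^ 2) c⁻¹ := by
    refine (hasDerivAt_inv (inv_ne_zero c0)).congr_deriv ?_
    field_simp
  have ic : c = (c⁻¹)⁻¹ := (inv_inv c).symm
  have Hf := HasDerivAt.comp_of_eq c⁻¹ HF Hi ic
  have Hg := HasDerivAt.comp_of_eq c⁻¹ HG Hi ic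
  have Hf' := Hf.congr_of_eventuallyEq (f₁ := f) (Filter.Eventually.of_forall fun t => hf t)
  have Hg' := Hg.congr_of_eventuallyEq (f₁ := g) (Filter.Eventually.of_forall fun t => hg t)
  refine ⟨Hf'.differentiableAt, Hg'.differentiableAt, ?_, ?_⟩
  · rw [Hf'.deriv, hf, hg]
    simp only [inv_inv, Pi.neg_apply, Pi.mul_apply, Pi.add_apply, id, ← hW, one_mul] at h2 ⊢
    rw [hdx2, hdy2, hyW]
    unfold P2
    generalize x c = X at *
    clear * - c0 c1 W0 h2
    have c2 : 1 - c ≠ 0 := fun h => c1 (by linear_combination -h)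
    obtain ⟨D, hD⟩ : ∃ D, D = (X - β) * (X - γ) + c * W := ⟨_, rfl⟩
    rw [← hD] at h2 ⊢
    field_simp
    rw [hD]
    ring
  · rw [Hg'.deriv, hf, hg]
    simp only [inv_inv, Pi.neg_apply, Pi.mul_apply, Pi.add_apply, id, ← hW, one_mul] at h2 ⊢
    rw [hdx2, hdy2, hyW]
    unfold P2
    generalize x c = X at *
    clear * - c0 c1 W0 h2
    have c2 : 1 - c ≠ 0 := fun h => c1 (by linear_combination -h)
    obtain ⟨D, hD⟩ : ∃ D, D = (X - β) * (X - γ) + c * W := ⟨_, rfl⟩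
    rw [← hD] at h2 ⊢
    field_simp
    rw [hD]
    ring
end

section
/- Let α, β, γ, n ∈ ℂ, and suppose f, g are differentiable complex functions of t on an open set with t ∉ {0,1} and f(t) ∉ {0, 1, t}, satisfying t(t−1)f' = (1+2n+α+2β−2γ+2g)f² + (β−γ+2g)t − f(1 + n(1+t) + α + β + 2tβ − 2γ − tγ + 2(1+t)g) and t(t−1)f·g' = t(β−γ+g)g − (1+n+β−γ+g)(n+α+β−γ+g)f². Then f is twice differentiable and satisfies the sixth Painlevé equation with parameters A = (α−1)²/2, B = −(β−γ)²/2, C = (n+β)²/2, D = 1/2 − (n+α−γ)²/2. -/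
/-- The right-hand side of the sixth Painlevé equation with parameters `A, B, C, D`,
evaluated at independent variable `t`, function value `fv`, and derivative `f'`. -/
noncomputable def P6RHS (A B C D t fv f' : ℂ) : ℂ :=
  (1 / 2) * (1 / fv + 1 / (fv - 1) + 1 / (fv - t)) * f' ^ 2
    - (1 / t + 1 / (t - 1) + 1 / (fv - t)) * f'
    + (fv * (fv - 1) * (fv - t) / (t ^ 2 * (t - 1) ^ 2))
      * (A + B * t / fv ^ 2 + C * (t - 1) / (fv - 1) ^ 2
          + D * t * (t - 1) / (fv - t) ^ 2)

theorem alg_aux (α β γ n t f g d e : ℂ) (h0 : t ≠ 0) (h1 : t - 1 ≠ 0) (hf0 : f ≠ 0)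
    (hf1 : f - 1 ≠ 0) (hft : f - t ≠ 0)
    (hd : d = ((1 + 2 * n + α + 2 * β - 2 * γ + 2 * g) * f ^ 2 + (β - γ + 2 * g) * t
        - f * (1 + n * (1 + t) + α + β + 2 * t * β - 2 * γ - t * γ
            + 2 * (1 + t) * g)) / (t * (t - 1)))
    (he : e = (t * (β - γ + g) * g
        - (1 + n + β - γ + g) * (n + α + β - γ + g) * f ^ 2) / (t * (t - 1) * f)) :
    P6RHS ((α - 1) ^ 2 / 2) (-(β - γ) ^ 2 / 2) ((n + β) ^ 2 / 2)
        (1 / 2 - (n + α - γ) ^ 2 / 2) t f d =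
    (((β - γ + 2 * g) - f * (n + 2 * β - γ + 2 * g)
      + (2 * f * (1 + 2 * n + α + 2 * β - 2 * γ + 2 * g)
        - (1 + n * (1 + t) + α + β + 2 * t * β - 2 * γ - t * γ + 2 * (1 + t) * g)) * d
      + (2 * f ^ 2 + 2 * t - 2 * f * (1 + t)) * e) - (2 * t - 1) * d) / (t * (t - 1)) := by
  subst hd he
  unfold P6RHS
  field_simp
  ring

/-- The `(f,g)`-system obtained from the hypergeometric weight is equivalent to the
sixth Painlevé equation for `f` with parameters `A = (α−1)²/2`, `B = −(β−γ)²/2`,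
`C = (n+β)²/2`, `D = 1/2 − (n+α−γ)²/2`. -/
theorem stmt_8 (α β γ n : ℂ) (U : Set ℂ) (hU : IsOpen U)
    (f g df dg : ℂ → ℂ)
    (ht0 : ∀ t ∈ U, t ≠ 0) (ht1 : ∀ t ∈ U, t ≠ 1)
    (hf0 : ∀ t ∈ U, f t ≠ 0) (hf1 : ∀ t ∈ U, f t ≠ 1) (hft : ∀ t ∈ U, f t ≠ t)
    (hf : ∀ t ∈ U, HasDerivAt f (df t) t)
    (hg : ∀ t ∈ U, HasDerivAt g (dg t) t)
    (hsys1 : ∀ t ∈ U, t * (t - 1) * df t =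
      (1 + 2 * n + α + 2 * β - 2 * γ + 2 * g t) * (f t) ^ 2 + (β - γ + 2 * g t) * t
        - f t * (1 + n * (1 + t) + α + β + 2 * t * β - 2 * γ - t * γ
            + 2 * (1 + t) * g t))
    (hsys2 : ∀ t ∈ U, t * (t - 1) * f t * dg t =
      t * (β - γ + g t) * g t
        - (1 + n + β - γ + g t) * (n + α + β - γ + g t) * (f t) ^ 2) :
    ∀ t ∈ U, HasDerivAt (deriv f)
      (P6RHS ((α - 1) ^ 2 / 2) (-(β - γ) ^ 2 / 2) ((n + β) ^ 2 / 2)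
        (1 / 2 - (n + α - γ) ^ 2 / 2) t (f t) (deriv f t)) t := by
  intro t ht
  have key : ∀ s ∈ U, df s = ((1 + 2 * n + α + 2 * β - 2 * γ + 2 * g s) * (f s) ^ 2
        + (β - γ + 2 * g s) * s
        - f s * (1 + n * (1 + s) + α + β + 2 * s * β - 2 * γ - s * γ
            + 2 * (1 + s) * g s)) / (s * (s - 1)) := by
    intro s hs
    rw [← hsys1 s hs]
    have := ht0 s hs
    have := sub_ne_zero.2 (ht1 s hs)
    field_simp
  have h0 := ht0 t ht
  have h1 := sub_ne_zero.2 (ht1 t ht)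
  have hf0' := hf0 t ht
  have he : dg t = (t * (β - γ + g t) * g t
        - (1 + n + β - γ + g t) * (n + α + β - γ + g t) * (f t) ^ 2)
          / (t * (t - 1) * f t) := by
    rw [← hsys2 t ht]
    field_simp
  rw [(hf t ht).deriv, alg_aux α β γ n t (f t) (g t) (df t) (dg t) h0 h1 hf0'
    (sub_ne_zero.2 (hf1 t ht)) (sub_ne_zero.2 (hft t ht)) (key t ht) he]
  have hev : deriv f =ᶠ[nhds t] fun s => ((1 + 2 * n + α + 2 * β - 2 * γ + 2 * g s) * (f s) ^ 2
        + (β - γ + 2 * g s) * s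
        - f s * (1 + n * (1 + s) + α + β + 2 * s * β - 2 * γ - s * γ
            + 2 * (1 + s) * g s)) / (s * (s - 1)) := by
    filter_upwards [hU.mem_nhds ht] with s hs
    rw [(hf s hs).deriv, key s hs]
  refine HasDerivAt.congr_of_eventuallyEq ?_ hev
  have hF := hf t ht
  have hG := (hg t ht).const_mul 2
  have hI := hasDerivAt_id' t
  have hS := hI.const_add 1
  have H := ((((hG.const_add (1 + 2 * n + α + 2 * β - 2 * γ)).mul (hF.pow 2)).add
    ((hG.const_add (β - γ)).mul hI)).sub (hF.mul
      ((((((((hS.const_mul n).const_add 1).add_const α).add_const β).add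
        ((hI.const_mul 2).mul_const β)).sub_const (2 * γ)).sub (hI.mul_const γ)).add
        ((hS.const_mul 2).mul (hg t ht))))).div (hI.mul (hI.sub_const 1))
        (mul_ne_zero h0 h1)
  refine H.congr_deriv ?_
  have hN := hsys1 t ht
  simp only [Pi.add_apply, Pi.mul_apply, Pi.sub_apply, Pi.pow_apply]
  rw [div_eq_div_iff (pow_ne_zero 2 (mul_ne_zero h0 h1)) (mul_ne_zero h0 h1)]
  push_cast
  linear_combination (t * (t - 1)) * (2 * t - 1) * hN
end

section
/- Let α, β, γ, n ∈ ℂ and let x, y be differentiable functions satisfying the hypergeometric-weight differential system on an open set of values of c avoiding {0, 1}. Set t = 1/c and define f(t) = −(x−β)(x−γ)/(c(nx − αβ + (α+β)x − x² + y)) and g(t) = γ − x, where x = x(1/t), y = y(1/t), c = 1/t, assuming the displayed denominator is nonzero. Then f and g are differentiable in t and satisfy the standard Hamiltonian form of the sixth Painlevé equation in the form: t(t−1)f' = (1+α−2γ+2g)f² + t(β−γ+2g) + (n(t−1) − 1 − α − β + γ(2+t) − 2(t+1)g)f, and t(t−1)f·g' = (γ−1−g)(α−γ+g)f² + t(β−γ+g)g.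 -/
theorem aux2 (α β γ n x y c : ℂ) (h0 : c ≠ 0) (h1 : c - 1 ≠ 0)
    (hd : n * x - α * β + (α + β) * x - x ^ 2 + y ≠ 0) :
    c⁻¹ * (c⁻¹ - 1) * (-((x - β) * (x - γ)) / (c * (n * x - α * β + (α + β) * x - x ^ 2 + y))) * (-(P1 α β γ n x y c / Qd α β γ n x y c) * -c ^ 2) =
      (γ - 1 - (γ - x)) * (α - γ + (γ - x)) * (-((x - β) * (x - γ)) / (c * (n * x - α * β + (α + β) * x - x ^ 2 + y))) ^ 2
        + c⁻¹ * (β - γ + (γ - x)) * (γ - x) := by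
  obtain ⟨D, hD⟩ : ∃ D, D = n * x - α * β + (α + β) * x - x ^ 2 + y := ⟨_, rfl⟩
  have hQ : Qd α β γ n x y c = -(c * (c - 1) * D) := by rw [hD]; unfold Qd; ring
  rw [hQ]
  rw [← hD] at hd ⊢
  obtain rfl : y = D - (n * x - α * β + (α + β) * x - x ^ 2) := by rw [hD]; ring
  clear hD hQ
  unfold P1
  field_simp
  ring

theorem aux1 (α β γ n x y c : ℂ) (h0 : c ≠ 0) (h1 : c - 1 ≠ 0)
    (hd : n * x - α * β + (α + β) * x - x ^ 2 + y ≠ 0) :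
    c⁻¹ * (c⁻¹ - 1) * (((-((P1 α β γ n x y c / Qd α β γ n x y c) * (x - γ) + (x - β) * (P1 α β γ n x y c / Qd α β γ n x y c)))
        * (c * (n * x - α * β + (α + β) * x - x ^ 2 + y))
        - (-((x - β) * (x - γ))) * (1 * (n * x - α * β + (α + β) * x - x ^ 2 + y)
          + c * (n * (P1 α β γ n x y c / Qd α β γ n x y c) + (α + β) * (P1 α β γ n x y c / Qd α β γ n x y c)
            - (2 : ℕ) * x ^ (2 - 1) * (P1 α β γ n x y c / Qd α β γ n x y c) + P2 α β γ n x y c / Qd α β γ n x y c)))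
        / (c * (n * x - α * β + (α + β) * x - x ^ 2 + y)) ^ 2 * -c ^ 2) =
      (1 + α - 2 * γ + 2 * (γ - x)) * (-((x - β) * (x - γ)) / (c * (n * x - α * β + (α + β) * x - x ^ 2 + y))) ^ 2
        + c⁻¹ * (β - γ + 2 * (γ - x))
        + (n * (c⁻¹ - 1) - 1 - α - β + γ * (2 + c⁻¹) - 2 * (c⁻¹ + 1) * (γ - x)) * (-((x - β) * (x - γ)) / (c * (n * x - α * β + (α + β) * x - x ^ 2 + y))) := by
  obtain ⟨D, hD⟩ : ∃ D, D = n * x - α * β + (α + β) * x - x ^ 2 + y := ⟨_, rfl⟩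
  have hQ : Qd α β γ n x y c = -(c * (c - 1) * D) := by rw [hD]; unfold Qd; ring
  rw [hQ]
  rw [← hD] at hd ⊢
  obtain rfl : y = D - (n * x - α * β + (α + β) * x - x ^ 2) := by rw [hD]; ring
  clear hD hQ
  unfold P1 P2
  norm_num only [pow_one, Nat.cast_ofNat]
  field_simp
  ring

/-- The hypergeometric-weight differential system, under the change of variables
`t = 1/c`, `f` as in (transf initial) and `g = γ − x`, becomes the standard
Hamiltonian form of the sixth Painlevé equation (system `fginitial`). -/
theorem stmt_9 (α β γ n : ℂ) (U : Set ℂ) (hU : IsOpen U)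
    (hc0 : ∀ c ∈ U, c ≠ 0) (hc1 : ∀ c ∈ U, c ≠ 1)
    (x y f g : ℂ → ℂ)
    (hQ : ∀ c ∈ U, Qd α β γ n (x c) (y c) c ≠ 0)
    (hx : ∀ c ∈ U, HasDerivAt x
      (P1 α β γ n (x c) (y c) c / Qd α β γ n (x c) (y c) c) c)
    (hy : ∀ c ∈ U, HasDerivAt y
      (P2 α β γ n (x c) (y c) c / Qd α β γ n (x c) (y c) c) c)
    (hf : ∀ t : ℂ, f t = -((x t⁻¹ - β) * (x t⁻¹ - γ)) /
      (t⁻¹ * (n * x t⁻¹ - α * β + (α + β) * x t⁻¹ - (x t⁻¹) ^ 2 + y t⁻¹)))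
    (hg : ∀ t : ℂ, g t = γ - x t⁻¹)
    (hden : ∀ c ∈ U, c * (n * x c - α * β + (α + β) * x c - (x c) ^ 2 + y c) ≠ 0) :
    ∀ c ∈ U,
      DifferentiableAt ℂ f c⁻¹ ∧ DifferentiableAt ℂ g c⁻¹ ∧
      c⁻¹ * (c⁻¹ - 1) * deriv f c⁻¹ =
        (1 + α - 2 * γ + 2 * g c⁻¹) * (f c⁻¹) ^ 2
          + c⁻¹ * (β - γ + 2 * g c⁻¹)
          + (n * (c⁻¹ - 1) - 1 - α - β + γ * (2 + c⁻¹) - 2 * (c⁻¹ + 1) * g c⁻¹)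
            * f c⁻¹ ∧
      c⁻¹ * (c⁻¹ - 1) * f c⁻¹ * deriv g c⁻¹ =
        (γ - 1 - g c⁻¹) * (α - γ + g c⁻¹) * (f c⁻¹) ^ 2
          + c⁻¹ * (β - γ + g c⁻¹) * g c⁻¹ := by
  intro c hc
  have h0 := hc0 c hc
  have h1 : c - 1 ≠ 0 := sub_ne_zero.mpr (hc1 c hc)
  have hd := hden c hc
  have hX := hx c hc
  have hY := hy c hc
  have hgc : g c⁻¹ = γ - x c := by rw [hg, inv_inv]
  have hfc := hf c⁻¹
  rw [inv_inv] at hfc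
  have hi : HasDerivAt (fun t : ℂ => t⁻¹) (-c ^ 2) c⁻¹ := by
    have := hasDerivAt_inv (inv_ne_zero h0)
    simpa using this
  have hF : HasDerivAt (fun c : ℂ => -((x c - β) * (x c - γ)) /
      (c * (n * x c - α * β + (α + β) * x c - (x c) ^ 2 + y c))) _ c :=
    (((hX.sub_const β).mul (hX.sub_const γ)).neg).div
      ((hasDerivAt_id' c).mul
        (((((hX.const_mul n).sub_const (α * β)).add (hX.const_mul (α + β))).sub
          (hX.pow 2)).add hY)) hd
  have hf' : f = (fun c : ℂ => -((x c - β) * (x c - γ)) /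
      (c * (n * x c - α * β + (α + β) * x c - (x c) ^ 2 + y c))) ∘ (fun t : ℂ => t⁻¹) := by
    funext t; rw [hf]; rfl
  have hg' : g = (fun c : ℂ => γ - x c) ∘ (fun t : ℂ => t⁻¹) := by
    funext t; rw [hg]; rfl
  have hG : HasDerivAt (fun c : ℂ => γ - x c) _ c := hX.const_sub γ
  have hfd := HasDerivAt.comp_of_eq c⁻¹ hF hi (inv_inv c).symm
  have hgd := HasDerivAt.comp_of_eq c⁻¹ hG hi (inv_inv c).symm
  rw [← hf'] at hfd
  rw [← hg'] at hgd
  refine ⟨hfd.differentiableAt, hgd.differentiableAt, ?_, ?_⟩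
  · rw [hfd.deriv, hgc, hfc]
    simp only [Pi.mul_apply, Pi.sub_apply, Pi.add_apply, Pi.neg_apply, Pi.pow_apply]
    exact aux1 α β γ n (x c) (y c) c h0 h1 (right_ne_zero_of_mul hd)
  · rw [hgd.deriv, hgc, hfc]
    exact aux2 α β γ n (x c) (y c) c h0 h1 (right_ne_zero_of_mul hd)
end

section
/- Let α, β, γ, n ∈ ℂ. Define s(x,y) = x² − (n+α+β)x − y + αβ and K(x,y,c) = (1/(c−1))·( (x−1)(x−α)(x−β)(x−γ)/(c(αβ − (n+α+β)x + x² − y)) − x(x+n−1−γ)/c − y ). If x, y are differentiable functions satisfying the hypergeometric-weight differential system at a point c with c ∉ {0,1} and s(x(c), y(c)) ≠ 0, then the system is Hamiltonian with respect to the symplectic form dx∧dy/s with Hamiltonian K; that is, x'(c)/s(x(c),y(c)) = ∂K/∂y evaluated at (x(c),y(c),c), and y'(c)/s(x(c),y(c)) = −∂K/∂x evaluated at (x(c),y(c),c). -/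
/-- `s(x,y) = x² − (n+α+β)x − y + αβ`. -/
noncomputable def sHW (α β n x y : ℂ) : ℂ := x ^ 2 - (n + α + β) * x - y + α * β

/-- The Hamiltonian of the hypergeometric-weight differential system. -/
noncomputable def KHW (α β γ n x y c : ℂ) : ℂ :=
  (1 / (c - 1)) * ((x - 1) * (x - α) * (x - β) * (x - γ) /
      (c * (α * β - (n + α + β) * x + x ^ 2 - y))
    - x * (x + n - 1 - γ) / c - y)

/-- The hypergeometric-weight differential system is Hamiltonian with respect to the
symplectic form `dx∧dy/s` with Hamiltonian `KHW`. -/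
theorem stmt_10 (α β γ n c : ℂ) (hc0 : c ≠ 0) (hc1 : c ≠ 1)
    (x y : ℂ → ℂ) (dx dy : ℂ)
    (hx : HasDerivAt x dx c) (hy : HasDerivAt y dy c)
    (hs : sHW α β n (x c) (y c) ≠ 0)
    (hsys1 : dx = P1 α β γ n (x c) (y c) c / Qd α β γ n (x c) (y c) c)
    (hsys2 : dy = P2 α β γ n (x c) (y c) c / Qd α β γ n (x c) (y c) c) :
    dx / sHW α β n (x c) (y c) = deriv (fun v => KHW α β γ n (x c) v c) (y c) ∧
    dy / sHW α β n (x c) (y c) = -deriv (fun u => KHW α β γ n u (y c) c) (x c) := by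
  clear hx hy
  subst hsys1 hsys2
  generalize x c = X at *
  generalize y c = Y at *
  have hc1' : c - 1 ≠ 0 := sub_ne_zero.mpr hc1
  unfold sHW at *
  have hS : α * β - (n + α + β) * X + X ^ 2 - Y ≠ 0 := by
    intro h; apply hs; rw [← h]; ring
  have hsS : X ^ 2 - (n + α + β) * X - Y + α * β
      = α * β - (n + α + β) * X + X ^ 2 - Y := by ring
  have hd : c * (α * β - (n + α + β) * X + X ^ 2 - Y) ≠ 0 := mul_ne_zero hc0 hS
  have i1 := hasDerivAt_id' Y
  have i2 := hasDerivAt_id' X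
  have e1 := (((((hasDerivAt_const Y ((X - 1) * (X - α) * (X - β) * (X - γ))).fun_div
    ((i1.const_sub (α * β - (n + α + β) * X + X ^ 2)).const_mul c) hd).sub_const
      (X * (X + n - 1 - γ) / c)).fun_sub i1).const_mul (1 / (c - 1)))
  have e2 := ((((((((i2.sub_const 1).fun_mul (i2.sub_const α)).fun_mul (i2.sub_const β)).fun_mul
    (i2.sub_const γ)).fun_div
    (((((i2.const_mul (n + α + β)).const_sub (α * β)).fun_add (i2.fun_pow 2)).sub_const
      Y).const_mul c) hd).fun_sub
      ((i2.fun_mul (((i2.add_const n).sub_const 1).sub_const γ)).div_const c)).sub_const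
        Y).const_mul (1 / (c - 1)))
  have q1 : P1 α β γ n X Y c = (X - 1) * (X - α) * (X - β) * (X - γ)
      - c * (α * β - (n + α + β) * X + X ^ 2 - Y) ^ 2 := by
    unfold P1; ring
  have q2 : P2 α β γ n X Y c = (X - 1) * (X - α) * (X - β) * (X - γ) * (2 * X - (n + α + β))
      - ((X - α) * (X - β) * (X - γ) + (X - 1) * (X - β) * (X - γ)
        + (X - 1) * (X - α) * (X - γ) + (X - 1) * (X - α) * (X - β))
          * (α * β - (n + α + β) * X + X ^ 2 - Y)
      + (2 * X + n - 1 - γ) * (α * β - (n + α + β) * X + X ^ 2 - Y) ^ 2 := by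
    unfold P2; ring
  unfold KHW
  rw [e1.deriv, e2.deriv, q1, q2, hsS]
  unfold Qd
  clear e1 e2 q1 q2 hd hsS hs
  generalize α * β - (n + α + β) * X + X ^ 2 - Y = S at *
  constructor
  · field_simp
    ring
  · field_simp
    push_cast
    ring
end

section
/- Let α, β, γ ∈ ℂ with γ not a nonpositive integer. For |c| < 1 define the convergent power series F(c) = Σ_{k≥0} ((α)ₖ(β)ₖ/((γ)ₖ·k!))·cᵏ and G(c) = Σ_{k≥0} ((α+1)ₖ(β+1)ₖ/((γ+1)ₖ·k!))·cᵏ, where (z)ₖ denotes the Pochhammer symbol (rising factorial). Define x₀(c) = (αβc/γ)·G(c)/F(c) + ((α+β)c − γ)/(c−1). Then at every c with |c| < 1, c ∉ {0,1} and F(c) ≠ 0, the function x₀ satisfies the Riccati equation c(c−1)x₀' + (c−1)x₀² + (1 − c(α+β) + γ)x₀ + αβc − γ = 0. -/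
/-- The Gauss hypergeometric series `₂F₁(α, β; γ; c) = Σ_{k≥0} (α)ₖ(β)ₖ/((γ)ₖ·k!)·cᵏ`,
where `(z)ₖ` is the Pochhammer symbol (rising factorial). -/
noncomputable def hypF (α β γ c : ℂ) : ℂ :=
  ∑' k : ℕ, ((ascPochhammer ℂ k).eval α * (ascPochhammer ℂ k).eval β /
    ((ascPochhammer ℂ k).eval γ * (k.factorial : ℂ))) * c ^ k


noncomputable def hypA (α β γ : ℂ) (k : ℕ) : ℂ :=
  (ascPochhammer ℂ k).eval α * (ascPochhammer ℂ k).eval β /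
    ((ascPochhammer ℂ k).eval γ * (k.factorial : ℂ))

lemma hyp_add_ne {γ : ℂ} (hγ : ∀ m : ℕ, γ ≠ -(m : ℂ)) (k : ℕ) : γ + k ≠ 0 :=
  fun h => hγ k (eq_neg_of_add_eq_zero_left h)

lemma hyp_poch_ne {γ : ℂ} (hγ : ∀ m : ℕ, γ ≠ -(m : ℂ)) (k : ℕ) :
    (ascPochhammer ℂ k).eval γ ≠ 0 := by
  induction k with
  | zero => simp
  | succ k ih =>
    rw [ascPochhammer_succ_eval]
    exact mul_ne_zero ih (hyp_add_ne hγ k)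

lemma hypA_succ {α β γ : ℂ} (hγ : ∀ m : ℕ, γ ≠ -(m : ℂ)) (k : ℕ) :
    hypA α β γ (k + 1) = hypA α β γ k * ((α + k) / (γ + k) * ((β + k) / (1 + k))) := by
  have h1 := hyp_add_ne hγ k
  have h2 := hyp_poch_ne hγ k
  have h3 : (k.factorial : ℂ) ≠ 0 := by exact_mod_cast k.factorial_ne_zero
  have h4 : (1 + k : ℂ) ≠ 0 := by rw [add_comm]; exact Nat.cast_add_one_ne_zero k
  unfold hypA
  rw [ascPochhammer_succ_eval, ascPochhammer_succ_eval, ascPochhammer_succ_eval,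
    Nat.factorial_succ]
  push_cast
  rw [add_comm (k : ℂ) 1]
  field_simp

lemma hyp_poch_left (γ : ℂ) (k : ℕ) :
    (ascPochhammer ℂ (k + 1)).eval γ = γ * (ascPochhammer ℂ k).eval (γ + 1) := by
  rw [ascPochhammer_succ_left]
  simp [Polynomial.eval_comp]

lemma hypA_shift {α β γ : ℂ} (k : ℕ) :
    ((k + 1 : ℕ) : ℂ) * hypA α β γ (k + 1) =
      α * β / γ * hypA (α + 1) (β + 1) (γ + 1) k := by
  have h4 : (k + 1 : ℂ) ≠ 0 := Nat.cast_add_one_ne_zero k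
  unfold hypA
  rw [hyp_poch_left, hyp_poch_left, hyp_poch_left, Nat.factorial_succ]
  push_cast
  by_cases h : γ = 0
  · simp [h]
  by_cases h' : (ascPochhammer ℂ k).eval (γ + 1) = 0
  · simp [h']
  have h3 : (k.factorial : ℂ) ≠ 0 := by exact_mod_cast k.factorial_ne_zero
  field_simp

lemma hypA_summable {α β γ : ℂ} (hγ : ∀ m : ℕ, γ ≠ -(m : ℂ)) (n : ℕ) {z : ℂ} (hz : ‖z‖ < 1) :
    Summable (fun k : ℕ => (k : ℂ) ^ n * hypA α β γ k * z ^ k) := by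
  obtain ⟨r, hr0, hr1⟩ := exists_between hz
  have key (a b : ℂ) : Filter.Tendsto (fun k : ℕ => (a + k) / (b + k)) Filter.atTop
      (nhds (1 : ℂ)) := by
    simpa using tendsto_add_mul_div_add_mul_atTop_nhds a b (1 : ℂ) (one_ne_zero (α := ℂ))
  have T : Filter.Tendsto (fun k : ℕ => ((1 + k : ℂ) / (0 + k)) ^ n *
      ((α + k) / (γ + k) * ((β + k) / (1 + k))) * z) Filter.atTop (nhds z) := by
    simpa using ((((key 1 0).pow n).mul ((key α γ).mul (key β 1))).mul_const z)
  refine summable_of_ratio_norm_eventually_le hr1 ?_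
  filter_upwards [T.norm.eventually_le_const hr0, Filter.eventually_gt_atTop 0] with k hk hk0
  have hk0' : (k : ℂ) ≠ 0 := by exact_mod_cast hk0.ne'
  have : ((k + 1 : ℕ) : ℂ) ^ n * hypA α β γ (k + 1) * z ^ (k + 1) =
      (((1 + k : ℂ) / (0 + k)) ^ n * ((α + k) / (γ + k) * ((β + k) / (1 + k))) * z) *
      ((k : ℂ) ^ n * hypA α β γ k * z ^ k) := by
    rw [hypA_succ hγ, zero_add, div_pow]
    push_cast
    rw [add_comm (k : ℂ) 1, pow_succ]
    generalize ((α + k) / (γ + k) * ((β + k) / (1 + k))) = q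
    field_simp
  rw [this, norm_mul]
  gcongr

lemma hyp_deriv (a : ℕ → ℂ)
    (h0 : ∀ z : ℂ, ‖z‖ < 1 → Summable (fun k : ℕ => (k : ℂ) * a k * z ^ k)) {c : ℂ}
    (hc : ‖c‖ < 1) (h1 : Summable (fun k : ℕ => a k * c ^ k)) :
    ∃ d : ℂ, HasDerivAt (fun z => ∑' k : ℕ, a k * z ^ k) d c ∧
      c * d = ∑' k : ℕ, (k : ℂ) * a k * c ^ k := by
  obtain ⟨r, hr0, hr1⟩ := exists_between hc
  have hr : 0 < r := (norm_nonneg _).trans_lt hr0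
  have hs := (h0 (r : ℂ) (by simpa [abs_of_pos hr] using hr1)).norm
  refine ⟨∑' k : ℕ, a k * (k * c ^ (k - 1)), ?_, ?_⟩
  · refine hasDerivAt_tsum_of_isPreconnected (u := fun k : ℕ => r⁻¹ * ‖(k : ℂ) * a k * (r : ℂ) ^ k‖)
      (t := Metric.ball (0 : ℂ) r) (y₀ := c) (g := fun k z => a k * z ^ k)
      (g' := fun k z => a k * (k * z ^ (k - 1))) (hs.mul_left _)
      Metric.isOpen_ball (convex_ball _ _).isPreconnected ?_ ?_ (by simpa using hr0) h1
      (by simpa using hr0)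
    · intro k y _
      exact (hasDerivAt_pow k y).const_mul (a k)
    · intro k y hy
      have hy' : ‖y‖ ≤ r := by simpa using (le_of_lt (mem_ball_zero_iff.1 hy))
      cases k with
      | zero => simp
      | succ k =>
        simp only [norm_mul, norm_pow, Complex.norm_real, Real.norm_eq_abs, abs_of_pos hr,
          Nat.add_sub_cancel]
        calc _ ≤ ‖a (k+1)‖ * (‖((k + 1 : ℕ) : ℂ)‖ * r ^ k) := by gcongr
          _ = _ := by rw [pow_succ]; field_simp
  · rw [← tsum_mul_left]
    refine tsum_congr fun k => ?_
    cases k with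
    | zero => simp
    | succ k => simp only [Nat.add_sub_cancel]; ring

/-- The initial condition `x₀(c) = (αβc/γ)·₂F₁(α+1,β+1;γ+1;c)/₂F₁(α,β;γ;c)
+ ((α+β)c − γ)/(c−1)` for the hypergeometric weight satisfies the Riccati equation
`c(c−1)x₀' + (c−1)x₀² + (1 − c(α+β) + γ)x₀ + αβc − γ = 0`. -/
theorem stmt_11 (α β γ : ℂ) (hγ : ∀ m : ℕ, γ ≠ -(m : ℂ))
    (x₀ : ℂ → ℂ)
    (hx₀ : ∀ c : ℂ, x₀ c =
      (α * β * c / γ) * hypF (α + 1) (β + 1) (γ + 1) c / hypF α β γ c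
        + ((α + β) * c - γ) / (c - 1)) :
    ∀ c : ℂ, ‖c‖ < 1 → c ≠ 0 → c ≠ 1 → hypF α β γ c ≠ 0 →
      DifferentiableAt ℂ x₀ c ∧
      c * (c - 1) * deriv x₀ c + (c - 1) * (x₀ c) ^ 2
        + (1 - c * (α + β) + γ) * x₀ c + α * β * c - γ = 0 := by
  intro c hc hc0 hc1 hF
  have eF : ∀ z, hypF α β γ z = ∑' k : ℕ, hypA α β γ k * z ^ k := fun z => rfl
  have eG : ∀ z, ‖z‖ < 1 → α * β * z / γ * hypF (α + 1) (β + 1) (γ + 1) z =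
      ∑' k : ℕ, ((k : ℂ) * hypA α β γ k) * z ^ k := by
    intro z hz
    rw [Summable.tsum_eq_zero_add (by simpa using hypA_summable (α := α) (β := β) hγ 1 hz)]
    change _ * (∑' k : ℕ, hypA (α + 1) (β + 1) (γ + 1) k * z ^ k) = _
    rw [← tsum_mul_left]
    simp only [Nat.cast_zero, zero_mul, zero_add]
    refine tsum_congr fun k => ?_
    rw [hypA_shift]
    ring
  have s0 := hypA_summable (α := α) (β := β) hγ 0 hc
  have s1 := hypA_summable (α := α) (β := β) hγ 1 hc
  have s2 := hypA_summable (α := α) (β := β) hγ 2 hc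
  simp only [pow_zero, one_mul, pow_one] at s0 s1
  obtain ⟨d0, hd0, e0⟩ := hyp_deriv (hypA α β γ)
    (fun z hz => by simpa using hypA_summable (α := α) (β := β) hγ 1 hz) hc s0
  obtain ⟨d1, hd1, e1⟩ := hyp_deriv (fun k => (k : ℂ) * hypA α β γ k)
    (fun z hz => by
      simpa [pow_two, mul_assoc] using hypA_summable (α := α) (β := β) hγ 2 hz) hc s1
  have ode : (∑' k : ℕ, (k : ℂ) ^ 2 * hypA α β γ k * c ^ k) +
      (γ - 1) * (∑' k : ℕ, (k : ℂ) * hypA α β γ k * c ^ k) =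
      c * ((∑' k : ℕ, (k : ℂ) ^ 2 * hypA α β γ k * c ^ k) +
      (α + β) * (∑' k : ℕ, (k : ℂ) * hypA α β γ k * c ^ k) +
      α * β * (∑' k : ℕ, hypA α β γ k * c ^ k)) := by
    rw [← tsum_mul_left, ← tsum_mul_left, ← tsum_mul_left,
      ← s2.tsum_add (s1.mul_left _), ← s2.tsum_add (s1.mul_left _),
      ← (s2.add (s1.mul_left _)).tsum_add (s0.mul_left _), ← tsum_mul_left,
      (s2.add (s1.mul_left _)).tsum_eq_zero_add]
    simp only [Nat.cast_zero, zero_mul, zero_add, mul_zero, ne_eq, OfNat.ofNat_ne_zero,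
      not_false_eq_true, zero_pow]
    refine tsum_congr fun k => ?_
    have h1 := hyp_add_ne hγ k
    have h4 : (1 + k : ℂ) ≠ 0 := by rw [add_comm]; exact Nat.cast_add_one_ne_zero k
    rw [hypA_succ hγ]
    push_cast
    field_simp
    ring
  have e1' : c * d1 = ∑' k : ℕ, (k : ℂ) ^ 2 * hypA α β γ k * c ^ k := by
    rw [e1]
    exact tsum_congr fun k => by ring
  rw [← e0, ← e1'] at ode
  have hc1' : c - 1 ≠ 0 := sub_ne_zero.2 hc1
  have hr : HasDerivAt (fun z : ℂ => ((α + β) * z - γ) / (z - 1))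
      (((α + β) * (c - 1) - ((α + β) * c - γ)) / (c - 1) ^ 2) c := by
    have := (((hasDerivAt_id c).const_mul (α + β)).sub_const γ).div
      ((hasDerivAt_id c).sub_const 1) hc1'
    convert! this using 1
    simp
  have hD := (hd1.div hd0 hF).add hr
  have hX := hD.congr_of_eventuallyEq (f₁ := x₀) (by
    have : ∀ᶠ z : ℂ in nhds c, ‖z‖ < 1 := continuous_norm.continuousAt.eventually_lt_const hc
    filter_upwards [this] with z hz
    rw [hx₀, eG z hz, eF]
    rfl)
  refine ⟨hX.differentiableAt, ?_⟩
  rw [hX.deriv, hx₀, eG c hc, ← e0]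
  rw [eF] at hF ⊢
  generalize (∑' k : ℕ, hypA α β γ k * c ^ k) = F at *
  field_simp
  linear_combination (-(c - 1) * F) * ode
end

section
/- Let α, β, γ, n ∈ ℂ. Suppose f is a twice differentiable complex function of t on an open set with t ∉ {0,1} and f(t) ∉ {0, 1, t}, satisfying the sixth Painlevé equation with parameters A = (α−1)²/2, B = −(β−γ)²/2, C = (n+β)²/2, D = 1/2 − (n+α−γ)²/2. Define h(c) = (c·f(1/c) − 1)/(f(1/c) − 1) for c with c ∉ {0,1}, f(1/c) ≠ 1 and h(c) ∉ {0, 1, c}. Then h satisfies the sixth Painlevé equation in the independent variable c with parameters A = (n+β)²/2, B = −(n+α−γ)²/2, C = (β−γ)²/2, D = −(α−2)α/2. -/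
lemma P6aux (a b e g D' c F p : ℂ) (hc : c ≠ 0) (hc1 : c - 1 ≠ 0) (hF : F ≠ 0)
    (hF1 : F - 1 ≠ 0) (hw : c * F - 1 ≠ 0) (hD : D' = 1 / 2 - a) :
    ((((-p / c ^ 2) * (F - 1) + F * (-p / c ^ 2)
      + ((-(P6RHS a b e (1 / 2 - g) c⁻¹ F p * (-1 / c ^ 2)) * c ^ 2 + p * (2 * c)) / c ^ 4 * (1 - c)
        + (-p / c ^ 2) * (-1))) * (F - 1) ^ 2
      - (F * (F - 1) + (-p / c ^ 2) * (1 - c)) * (2 * (F - 1) * (-p / c ^ 2))) / ((F - 1) ^ 2) ^ 2)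
    = P6RHS e (-g) (-b) D' c ((c * F - 1) / (F - 1))
        ((F * (F - 1) + (-p / c ^ 2) * (1 - c)) / (F - 1) ^ 2) := by
  subst hD
  have e1 : F - c⁻¹ = (c * F - 1) / c := by field_simp
  have e2 : c⁻¹ - 1 = -(c - 1) / c := by field_simp; ring
  have e3 : (c * F - 1) / (F - 1) - 1 = (c - 1) * F / (F - 1) := by field_simp; ring
  have e4 : (c * F - 1) / (F - 1) - c = (c - 1) / (F - 1) := by field_simp; ring
  unfold P6RHS
  rw [e1, e2, e3, e4]
  obtain ⟨d, rfl⟩ : ∃ d, c = d + 1 := ⟨c - 1, by ring⟩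
  obtain ⟨G, rfl⟩ : ∃ G, F = G + 1 := ⟨F - 1, by ring⟩
  simp only [add_sub_cancel_right] at *
  generalize hW : (d + 1) * (G + 1) - 1 = W at *
  have h1 : (1 : ℂ) - (d + 1) = -d := by ring
  rw [h1]
  field_simp
  rw [← hW]
  ring

/-- If `f` satisfies the sixth Painlevé equation with parameters
`A = (α−1)²/2`, `B = −(β−γ)²/2`, `C = (n+β)²/2`, `D = 1/2 − (n+α−γ)²/2`, then
`h(c) = (c·f(1/c) − 1)/(f(1/c) − 1)` satisfies the sixth Painlevé equation in `c`
with parameters `A = (n+β)²/2`, `B = −(n+α−γ)²/2`, `C = (β−γ)²/2`, `D = −(α−2)α/2`. -/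
theorem stmt_12 (α β γ n : ℂ) (U : Set ℂ) (hU : IsOpen U)
    (f f' : ℂ → ℂ)
    (ht0 : ∀ t ∈ U, t ≠ 0) (ht1 : ∀ t ∈ U, t ≠ 1)
    (hf0 : ∀ t ∈ U, f t ≠ 0) (hf1 : ∀ t ∈ U, f t ≠ 1) (hft : ∀ t ∈ U, f t ≠ t)
    (hd1 : ∀ t ∈ U, HasDerivAt f (f' t) t)
    (hd2 : ∀ t ∈ U, HasDerivAt f'
      (P6RHS ((α - 1) ^ 2 / 2) (-(β - γ) ^ 2 / 2) ((n + β) ^ 2 / 2)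
        (1 / 2 - (n + α - γ) ^ 2 / 2) t (f t) (f' t)) t)
    (h : ℂ → ℂ)
    (hh : ∀ c : ℂ, h c = (c * f c⁻¹ - 1) / (f c⁻¹ - 1)) :
    ∀ c : ℂ, c ≠ 0 → c ≠ 1 → c⁻¹ ∈ U → f c⁻¹ ≠ 1 →
      h c ≠ 0 → h c ≠ 1 → h c ≠ c →
      DifferentiableAt ℂ h c ∧
      HasDerivAt (deriv h)
        (P6RHS ((n + β) ^ 2 / 2) (-(n + α - γ) ^ 2 / 2) ((β - γ) ^ 2 / 2)
          (-(α - 2) * α / 2) c (h c) (deriv h c)) c := by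
  intro c hc hc1 hcU _ h0 _ _
  have key : ∀ x : ℂ, x ≠ 0 → x⁻¹ ∈ U → HasDerivAt h
      ((f x⁻¹ * (f x⁻¹ - 1) + (-f' x⁻¹ / x ^ 2) * (1 - x)) / (f x⁻¹ - 1) ^ 2) x := by
    intro x hx hxU
    have hF1 : f x⁻¹ - 1 ≠ 0 := sub_ne_zero.2 (hf1 _ hxU)
    have h1 : HasDerivAt (fun y => f y⁻¹) (f' x⁻¹ * (-(x ^ 2)⁻¹)) x :=
      (hd1 _ hxU).comp x (hasDerivAt_inv hx)
    have h2 := (((hasDerivAt_id x).mul h1).sub_const 1).div (h1.sub_const 1) hF1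
    rw [show h = fun c => (c * f c⁻¹ - 1) / (f c⁻¹ - 1) from funext hh]
    refine HasDerivAt.congr_deriv h2 ?_
    simp only [id, Pi.mul_apply]
    congr 1
    field_simp
    ring
  refine ⟨(key c hc hcU).differentiableAt, ?_⟩
  have hev : deriv h =ᶠ[nhds c] fun x =>
      ((f x⁻¹ * (f x⁻¹ - 1) + (-f' x⁻¹ / x ^ 2) * (1 - x)) / (f x⁻¹ - 1) ^ 2) := by
    have hopen : ∀ᶠ x in nhds c, x⁻¹ ∈ U :=
      (continuousAt_inv₀ hc).eventually (hU.mem_nhds hcU)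
    filter_upwards [hopen, isOpen_ne.mem_nhds hc] with x hx hx0
    exact (key x hx0 hx).deriv
  have hF1 : f c⁻¹ - 1 ≠ 0 := sub_ne_zero.2 (hf1 _ hcU)
  have hw : c * f c⁻¹ - 1 ≠ 0 := by
    intro hw; apply h0; rw [hh, hw, zero_div]
  refine HasDerivAt.congr_of_eventuallyEq ?_ hev
  rw [(key c hc hcU).deriv, hh c]
  have aux := P6aux ((α - 1) ^ 2 / 2) (-(β - γ) ^ 2 / 2) ((n + β) ^ 2 / 2) ((n + α - γ) ^ 2 / 2)
    (-(α - 2) * α / 2) c (f c⁻¹) (f' c⁻¹) hc (sub_ne_zero.2 hc1) (hf0 _ hcU) hF1 hw (by ring)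
  rw [show -((n + α - γ) ^ 2 / 2) = -(n + α - γ) ^ 2 / 2 by ring,
    show -(-(β - γ) ^ 2 / 2) = (β - γ) ^ 2 / 2 by ring] at aux
  rw [← aux]
  have h1 : HasDerivAt (fun y => f y⁻¹) (-f' c⁻¹ / c ^ 2) c :=
    ((hd1 _ hcU).comp c (hasDerivAt_inv hc)).congr_deriv (by field_simp)
  have h2 := (hd2 _ hcU).comp c (hasDerivAt_inv hc)
  have hsq : HasDerivAt (fun y : ℂ => y ^ 2) (2 * c) c := by
    simpa using hasDerivAt_pow 2 c
  have hlin : HasDerivAt (fun y : ℂ => 1 - y) (-1) c := by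
    simpa using (hasDerivAt_id c).const_sub 1
  have h3 := h2.neg.div hsq (pow_ne_zero 2 hc)
  have h4 := ((h1.mul (h1.sub_const 1)).add (h3.mul hlin)).div ((h1.sub_const 1).pow 2)
    (pow_ne_zero 2 hF1)
  refine HasDerivAt.congr_deriv h4 ?_
  generalize P6RHS _ _ _ _ _ _ _ = R
  simp only [Pi.mul_apply, Pi.add_apply, Pi.div_apply, Pi.neg_apply, Pi.pow_apply, Function.comp]
  clear aux h4 h3 h2 h1 hev key hw h0
  generalize f' c⁻¹ = p
  generalize f c⁻¹ = F at hF1 ⊢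
  push_cast
  rw [pow_one]
  field_simp
  ring
end

section
/- Let α, β, γ, n ∈ ℂ and c₀ ∈ ℂ ∖ {0, 1}. Suppose x, y are differentiable complex functions on a neighbourhood of c₀ satisfying the cleared-denominator form of the hypergeometric-weight differential system, Q(x(c), y(c), c)·x'(c) = P₁(x(c), y(c), c), for all c in that neighbourhood. If the point (x(c₀), y(c₀)) lies on the curve Γ defined by αβ − (n+α+β)x + x² − y = 0, then (x(c₀) − 1)(x(c₀) − α)(x(c₀) − β)(x(c₀) − γ) = 0; indeed, the polynomial identity P₁(x, x² − (n+α+β)x + αβ, c) = (x−1)(x−α)(x−β)(x−γ) holds for all x and c. In particular, no such solution passes through the extra indeterminacy point x = (n+α+β)/2, y = −(n² + 2n(α+β) + (α−β)²)/4 on Γ unless (n+α+β)/2 ∈ {1, α, β, γ}. -/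
/-- Solutions of the cleared-denominator hypergeometric-weight system meeting the
curve `Γ : αβ − (n+α+β)x + x² − y = 0` must do so at `x ∈ {1, α, β, γ}`; indeed
`P₁(x, x² − (n+α+β)x + αβ, c) = (x−1)(x−α)(x−β)(x−γ)` identically.  In particular no
such solution passes through the extra indeterminacy point `q₉` on `Γ` unless
`(n+α+β)/2 ∈ {1, α, β, γ}`. -/
theorem stmt_15 (α β γ n : ℂ) (c₀ : ℂ) (hc0 : c₀ ≠ 0) (hc1 : c₀ ≠ 1)
    (V : Set ℂ) (hV : IsOpen V) (hc₀V : c₀ ∈ V)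
    (x y dx : ℂ → ℂ)
    (hx : ∀ c ∈ V, HasDerivAt x (dx c) c)
    (hsys : ∀ c ∈ V, Qd α β γ n (x c) (y c) c * dx c = P1 α β γ n (x c) (y c) c)
    (hΓ : α * β - (n + α + β) * x c₀ + (x c₀) ^ 2 - y c₀ = 0) :
    ((x c₀ - 1) * (x c₀ - α) * (x c₀ - β) * (x c₀ - γ) = 0) ∧
    (∀ X C : ℂ, P1 α β γ n X (X ^ 2 - (n + α + β) * X + α * β) C
      = (X - 1) * (X - α) * (X - β) * (X - γ)) ∧
    (x c₀ = (n + α + β) / 2 →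
      y c₀ = -(n ^ 2 + 2 * n * (α + β) + (α - β) ^ 2) / 4 →
      ((n + α + β) / 2 = 1 ∨ (n + α + β) / 2 = α ∨
        (n + α + β) / 2 = β ∨ (n + α + β) / 2 = γ)) := by
  have key : ∀ X C : ℂ, P1 α β γ n X (X ^ 2 - (n + α + β) * X + α * β) C
      = (X - 1) * (X - α) * (X - β) * (X - γ) := by
    intro X C
    unfold P1
    ring
  have h1 : (x c₀ - 1) * (x c₀ - α) * (x c₀ - β) * (x c₀ - γ) = 0 := by
    have hy : y c₀ = (x c₀) ^ 2 - (n + α + β) * x c₀ + α * β := by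
      linear_combination -hΓ
    have hs := hsys c₀ hc₀V
    rw [← key (x c₀) c₀, ← hy, ← hs]
    unfold Qd
    rw [hΓ]
    ring
  refine ⟨h1, key, ?_⟩
  intro hxx _
  rw [hxx] at h1
  simp only [mul_eq_zero, sub_eq_zero] at h1
  tauto
end

section
/- Let α, N, c ∈ ℂ with c ≠ 0 and N ≠ 0, let n ∈ ℂ, and let A, A₊, B, B₋, x, x₋, y, y₊ be complex numbers related by B = (c−1+x)/(2c), B₋ = (c−1+x₋)/(2c), A = (n + N·y)/(2Nc), A₊ = (n + 1 + N·y₊)/(2Nc), with n + N·y ≠ 0. Then the pair of equations 2c(A₊ + A) + 2c·B² + (1−c)·B = (2n+α+1)/N and A·(2c·B + 1 − c)·(2c·B₋ + 1 − c) = (2c·A − n/N)·(2c·A − (n+α)/N) holds if and only if the pair of equations x·x₋ = 2Nc·y(y − α/N)/(n + N·y) and 2(y₊ + y) = 2α/N − (x² + (c−1)x)/c holds. -/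
/-- The change of variables `b_n = (c−1+x_n)/(2c)`, `a_n² = (n+N·y_n)/(2Nc)` turns the
discrete system for the recurrence coefficients of the semi-classical Laguerre weight
into the discrete system for `(x_n, y_n)`, and vice versa. Here `A, A₊` play the role
of `a_n², a_{n+1}²` and `B, B₋` the role of `b_n, b_{n−1}`. -/
theorem stmt_16 (α N c n : ℂ) (hc : c ≠ 0) (hN : N ≠ 0)
    (A Ap B Bm x xm y yp : ℂ)
    (hB : B = (c - 1 + x) / (2 * c))
    (hBm : Bm = (c - 1 + xm) / (2 * c))
    (hA : A = (n + N * y) / (2 * N * c))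
    (hAp : Ap = (n + 1 + N * yp) / (2 * N * c))
    (hny : n + N * y ≠ 0) :
    (2 * c * (Ap + A) + 2 * c * B ^ 2 + (1 - c) * B = (2 * n + α + 1) / N ∧
      A * (2 * c * B + 1 - c) * (2 * c * Bm + 1 - c)
        = (2 * c * A - n / N) * (2 * c * A - (n + α) / N)) ↔
    (x * xm = 2 * N * c * y * (y - α / N) / (n + N * y) ∧
      2 * (yp + y) = 2 * α / N - (x ^ 2 + (c - 1) * x) / c) := by
  have e1 : 2 * c * B + 1 - c = x := by
    rw [hB]; field_simp; ring
  have e2 : 2 * c * Bm + 1 - c = xm := by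
    rw [hBm]; field_simp; ring
  have e3 : 2 * c * A - n / N = y := by
    rw [hA]; field_simp; ring
  have e4 : 2 * c * A - (n + α) / N = y - α / N := by
    rw [hA]; field_simp; ring
  have e5 : 2 * c * (Ap + A) + 2 * c * B ^ 2 + (1 - c) * B - (2 * n + α + 1) / N
      = (2 * (yp + y) - (2 * α / N - (x ^ 2 + (c - 1) * x) / c)) / 2 := by
    rw [hA, hAp, hB]; field_simp; ring
  have e6 : A * x * xm = x * xm * (n + N * y) / (2 * N * c) := by
    rw [hA]; ring
  have h2 : 2 * N * c ≠ 0 := by simp [hN, hc]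
  rw [e1, e2, e3, e4, e6, and_comm]
  apply and_congr
  · rw [div_eq_iff h2, eq_div_iff hny]
    constructor <;> intro h <;> linear_combination h
  · rw [← sub_eq_zero, e5, div_eq_zero_iff, ← sub_eq_zero (a := 2 * (yp + y))]
    simp
end

section
/- Let α, β, γ, n, c ∈ ℂ with c ∉ {0, 1}, and let A, S, x₋, x, y be complex numbers satisfying A·(1−c)/c = y + S + n(n+α+β−γ−1)/(1−c) and ((1−c)²/c²)·A·x·x₋ = y·(y − αβ + γ/c) + (αβ − y)·((1−c)/c)·S. If αβ − x₋·x − y ≠ 0, then A = (n·αβ·c·(n+α+β−γ−1) − c·(n² + n(α+β−γ−1) − αβ + γ)·y − c·y²)/((c−1)²·(αβ − x₋·x − y)). -/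
/-- From the relations (2.1) and (2.5) for the recurrence coefficient `A = a_n²` of
the orthonormal polynomials with hypergeometric weight (with `S = x₀ + ⋯ + x_{n−1}`),
one obtains the alternative expression (2.6) for `A`. -/
theorem stmt_17 (α β γ n c : ℂ) (hc0 : c ≠ 0) (hc1 : c ≠ 1)
    (A S xm x y : ℂ)
    (h1 : A * (1 - c) / c = y + S + n * (n + α + β - γ - 1) / (1 - c))
    (h2 : (1 - c) ^ 2 / c ^ 2 * A * x * xm
      = y * (y - α * β + γ / c) + (α * β - y) * ((1 - c) / c) * S)
    (hne : α * β - xm * x - y ≠ 0) :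
    A = (n * α * β * c * (n + α + β - γ - 1)
        - c * (n ^ 2 + n * (α + β - γ - 1) - α * β + γ) * y - c * y ^ 2)
      / ((c - 1) ^ 2 * (α * β - xm * x - y)) := by
  have h1c : (1 : ℂ) - c ≠ 0 := sub_ne_zero.mpr (Ne.symm hc1)
  have hc1' : c - 1 ≠ 0 := sub_ne_zero.mpr hc1
  have hS : S = A * (1 - c) / c - y - n * (n + α + β - γ - 1) / (1 - c) := by
    rw [h1]; ring
  rw [hS] at h2
  rw [eq_div_iff (mul_ne_zero (pow_ne_zero 2 hc1') hne)]
  have e1 : c ^ 2 * ((1 - c) ^ 2 / c ^ 2 * A * x * xm) = (1 - c) ^ 2 * A * x * xm := by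
    field_simp
  have e2 : c ^ 2 * (y * (y - α * β + γ / c) + (α * β - y) * ((1 - c) / c) *
      (A * (1 - c) / c - y - n * (n + α + β - γ - 1) / (1 - c)))
      = y * (c ^ 2 * (y - α * β) + c * γ) + (α * β - y) *
        (A * (1 - c) ^ 2 - c * (1 - c) * y - c * (n * (n + α + β - γ - 1))) := by
    field_simp
  have e3 := congrArg (fun t => c ^ 2 * t) h2
  simp only [e1, e2] at e3
  linear_combination -e3
end

section
/- Let α, n ∈ ℂ and N ∈ ℂ with N ≠ 0, and let x, y be differentiable functions satisfying the semi-classical Laguerre differential system at a point c with c ∉ {0, −1}, x(c) ≠ 0 and y(c) ≠ 0. Define u₁ = x/y and v₁ = y (the blowup coordinates at the point (x,y) = (0,0)). Then u₁ and v₁ satisfy: u₁' = (−2c(c+1)N + (2c + N − c²N)·u₁ − (c+1)·n·u₁² − 2N(c+1)·u₁²·v₁)/(4c²) and v₁' = (c+1)·(2cα − 2cN·v₁ + n·u₁²·v₁ + N·u₁²·v₁²)/(4c²·u₁). -/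
/-- In the blowup coordinates `u₁ = x/y`, `v₁ = y` at the point `(x,y) = (0,0)`,
the semi-classical Laguerre differential system takes the lifted form (4.6). -/
theorem stmt_18 (α n N : ℂ) (hN : N ≠ 0) (c : ℂ)
    (hc0 : c ≠ 0) (hcm1 : c ≠ -1)
    (x y : ℂ → ℂ) (dx dy : ℂ)
    (hx : HasDerivAt x dx c) (hy : HasDerivAt y dy c)
    (hxne : x c ≠ 0) (hyne : y c ≠ 0)
    (hsys1 : dx / (c + 1) = -N * (x c) ^ 2 / (4 * c ^ 2)
        - (N * (c - 1) / (4 * c ^ 2) - 1 / (2 * c * (c + 1))) * x c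
        - N * y c / c + α / (2 * c))
    (hsys2 : dy / (c + 1) = -N * (y c) ^ 2 / (2 * c * x c)
        + (α / (2 * c * x c) + N * x c / (4 * c ^ 2)) * y c
        + n * x c / (4 * c ^ 2)) :
    HasDerivAt (fun s => x s / y s)
      ((-(2 * c * (c + 1) * N) + (2 * c + N - c ^ 2 * N) * (x c / y c)
          - (c + 1) * n * (x c / y c) ^ 2
          - 2 * N * (c + 1) * (x c / y c) ^ 2 * y c)
        / (4 * c ^ 2)) c ∧
    HasDerivAt y
      ((c + 1) * (2 * c * α - 2 * c * N * y c + n * (x c / y c) ^ 2 * y c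
          + N * (x c / y c) ^ 2 * (y c) ^ 2)
        / (4 * c ^ 2 * (x c / y c))) c := by
  have h1 : c + 1 ≠ 0 := fun h => hcm1 (eq_neg_of_add_eq_zero_left h)
  rw [div_eq_iff h1] at hsys1 hsys2
  constructor
  · refine (hx.fun_div hy hyne).congr_deriv ?_
    rw [hsys1, hsys2]
    field_simp
    ring
  · refine hy.congr_deriv ?_
    rw [hsys2]
    field_simp
    ring
end

section
/- Let N ∈ ℂ with N ≠ 0, and let c, t ∈ ℂ with c ∉ {0, 1} and 2ct² = (c−1)²·N. Define, for (x, y) ∈ ℂ² with x ≠ 0, q(x,y) = t·x/(c−1) and p(x,y) = −2ct·y/((c−1)·x). Then the map (x, y) ↦ (q, p) is symplectic from the form N·dx∧dy/x to dp∧dq: its partial derivatives satisfy (∂p/∂x)·(∂q/∂y) − (∂p/∂y)·(∂q/∂x) = N/x at every point with x ≠ 0. -/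
/-- The change of variables `q = t·x/(c−1)`, `p = −2cty/((c−1)x)` (with
`2ct² = (c−1)²N`) is symplectic from the 2-form `N·dx∧dy/x` to `dp∧dq`:
`(∂p/∂x)·(∂q/∂y) − (∂p/∂y)·(∂q/∂x) = N/x` at every point with `x ≠ 0`. -/
theorem stmt_19 (N c t : ℂ) (hN : N ≠ 0) (hc0 : c ≠ 0) (hc1 : c ≠ 1)
    (hrel : 2 * c * t ^ 2 = (c - 1) ^ 2 * N)
    (q p : ℂ → ℂ → ℂ)
    (hq : ∀ u v : ℂ, q u v = t * u / (c - 1))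
    (hp : ∀ u v : ℂ, p u v = -(2 * c * t * v) / ((c - 1) * u)) :
    ∀ u v : ℂ, u ≠ 0 →
      deriv (fun w => p w v) u * deriv (fun w => q u w) v
        - deriv (fun w => p u w) v * deriv (fun w => q w v) u = N / u := by
  intro u v hu
  have hc : c - 1 ≠ 0 := sub_ne_zero.mpr hc1
  have h1 : deriv (fun w => q u w) v = 0 := by
    simp only [hq]
    exact deriv_const v _
  have h2 : deriv (fun w => q w v) u = t * 1 / (c - 1) := by
    simp only [hq]
    exact (((hasDerivAt_id' u).const_mul t).div_const (c - 1)).deriv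
  have h3 : deriv (fun w => p u w) v = -(2 * c * t * 1) / ((c - 1) * u) := by
    simp only [hp]
    exact ((((hasDerivAt_id' v).const_mul (2 * c * t)).fun_neg).div_const ((c - 1) * u)).deriv
  rw [h1, h2, h3]
  field_simp
  linear_combination hrel
end
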